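/- There exists a universal constant ξ with 0 < ξ ≤ 1 such that the following holds. If k = k(n) and p = p(n) > 0 are sequences satisfying k = ω(log n) and n/k ≥ p·C(n−1, k−1) = ω(log³ n), then with high probability (probability tending to 1 as n → ∞) the random hypergraph G^k(n,p) is ξ-expanding. -/

import Mathlib

open scoped BigOperators

/-- A `k`-uniform hypergraph on vertex set `Fin n`. -/
structure KGraph (n k : ℕ) where
  edges : Finset (Finset (Fin n))
  uniform : ∀ e ∈ edges, e.card = k

namespace KGraph

variable {n k : ℕ}

/-- A loose path of edges from `x` to `y`: a nonempty list of edges, the first containing `x`,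
the last containing `y`, with consecutive edges intersecting. -/
def IsLoosePath (G : KGraph n k) (x y : Fin n) (l : List (Finset (Fin n))) : Prop :=
  l ≠ [] ∧ (∀ e ∈ l, e ∈ G.edges) ∧ (∀ e ∈ l.head?, x ∈ e) ∧
    (∀ e ∈ l.getLast?, y ∈ e) ∧ l.Chain' (fun e f => (e ∩ f).Nonempty)

/-- Distance between two vertices: the smallest length of a loose path between them
(`0` if they are equal, `⊤` if there is no such path). -/
noncomputable def dist (G : KGraph n k) (x y : Fin n) : ℕ∞ :=
  if x = y then 0
  else sInf ((fun l : List (Finset (Fin n)) => (l.length : ℕ∞)) '' {l | G.IsLoosePath x y l})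

/-- Distance between two sets of vertices: the minimum over pairs. -/
noncomputable def setDist (G : KGraph n k) (A B : Set (Fin n)) : ℕ∞ :=
  ⨅ (x ∈ A) (y ∈ B), G.dist x y

/-- The closed `r`-th vertex-neighbourhood of a set of vertices. -/
noncomputable def vNhd (G : KGraph n k) (A : Set (Fin n)) (r : ℕ) : Set (Fin n) :=
  {v | G.setDist A {v} ≤ (r : ℕ∞)}

/-- The set of vertices covered by a set of edges. -/
def VB (B : Set (Finset (Fin n))) : Set (Fin n) :=
  ⋃ e ∈ B, (e : Set (Fin n))

/-- The closed `r`-th vertex-neighbourhood of a set of edges. -/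
noncomputable def vNhdE (G : KGraph n k) (B : Set (Finset (Fin n))) (r : ℕ) : Set (Fin n) :=
  G.vNhd (VB B) r

/-- The closed `r`-th edge-neighbourhood of a set of vertices: edges within distance `r - 1`. -/
noncomputable def eNhd (G : KGraph n k) (A : Set (Fin n)) (r : ℕ) : Set (Finset (Fin n)) :=
  {e | e ∈ G.edges ∧ G.setDist (e : Set (Fin n)) A ≤ ((r - 1 : ℕ) : ℕ∞)}

/-- The average vertex degree of `G`. -/
noncomputable def avgDeg (G : KGraph n k) : ℝ :=
  (∑ v : Fin n, ((G.vNhd {v} 1).ncard : ℝ)) / n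

/-- A `k`-graph on `n` vertices with average vertex degree `d ≥ k` is `ξ`-expanding if
(A.1) edge-neighbourhoods of vertices are not too large, (A.2) vertex-neighbourhoods of vertex
sets have size comparable to `|A| d^r`, and (A.3) vertex-neighbourhoods of edge sets are large. -/
def IsExpanding (G : KGraph n k) (ξ : ℝ) : Prop :=
  (k : ℝ) ≤ G.avgDeg ∧
  (∀ v : Fin n, ∀ r : ℕ, 1 ≤ r → G.avgDeg ^ r ≤ Real.sqrt ((n : ℝ) * k) →
    ((G.eNhd {v} r).ncard : ℝ) ≤ ξ⁻¹ * G.avgDeg ^ r / k) ∧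
  (∀ A : Set (Fin n), ∀ r : ℕ, 1 ≤ r →
    ξ * min ((A.ncard : ℝ) * G.avgDeg ^ r) (n : ℝ) ≤ ((G.vNhd A r).ncard : ℝ) ∧
    ((G.vNhd A r).ncard : ℝ) ≤ ξ⁻¹ * (A.ncard : ℝ) * G.avgDeg ^ r) ∧
  (∀ B : Set (Finset (Fin n)), B ⊆ (G.edges : Set (Finset (Fin n))) → ∀ r : ℕ, 1 ≤ r →
    ξ * min ((B.ncard : ℝ) * k * G.avgDeg ^ r) (n : ℝ) ≤ ((G.vNhdE B r).ncard : ℝ))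

/-- `CopsWin G c r` : with the cops currently on the vertices `c i`, the robber on `r`, and the
cops to move, the cops have a strategy to catch the robber. Either a cop is already on the
robber's vertex; or the cops can move (each by distance at most 1) so that a cop lands on the
robber; or the cops can move so that whatever the robber's reply, the cops still win. -/
inductive CopsWin (G : KGraph n k) {m : ℕ} : (Fin m → Fin n) → Fin n → Prop
  | caught (c : Fin m → Fin n) (r : Fin n) (i : Fin m) (h : c i = r) : CopsWin G c r
  | stepCaught (c c' : Fin m → Fin n) (r : Fin n)
      (hmove : ∀ i, G.dist (c i) (c' i) ≤ 1) (i : Fin m) (h : c' i = r) : CopsWin G c r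
  | step (c c' : Fin m → Fin n) (r : Fin n)
      (hmove : ∀ i, G.dist (c i) (c' i) ≤ 1)
      (h : ∀ r' : Fin n, G.dist r r' ≤ 1 → CopsWin G c' r') : CopsWin G c r

/-- The cop number of `G` : the least `m` such that `m` cops can be initially placed so as to
catch the robber wherever he starts. -/
noncomputable def copNumber (G : KGraph n k) : ℕ :=
  sInf {m : ℕ | ∃ c₀ : Fin m → Fin n, ∀ r₀ : Fin n, CopsWin G c₀ r₀}

/-- `G` is connected if all pairs of vertices are at finite distance. -/
def Connected (G : KGraph n k) : Prop := ∀ x y : Fin n, G.dist x y ≠ ⊤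

end KGraph

open Classical in
/-- The probability that the binomial random `k`-uniform hypergraph `G^k(n,p)` (each `k`-subset
of `[n]` an edge independently with probability `p`) satisfies the property `Q`. -/
noncomputable def ghProb (n k : ℕ) (p : ℝ) (Q : KGraph n k → Prop) : ℝ :=
  ∑ E ∈ (Finset.powersetCard k (Finset.univ : Finset (Fin n))).powerset,
    if h : ∀ e ∈ E, e.card = k then
      (if Q ⟨E, h⟩ then
        p ^ E.card * (1 - p) ^ ((Finset.powersetCard k (Finset.univ : Finset (Fin n))).card - E.card)
      else 0)
    else 0



namespace KGraph
open Classical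

/-- edges touching `A` -/
noncomputable def touch {n : ℕ} (E : Finset (Finset (Fin n))) (A : Finset (Fin n)) :
    Finset (Finset (Fin n)) := E.filter (fun e => (e ∩ A).Nonempty)

/-- one-step closed neighbourhood -/
noncomputable def nb {n : ℕ} (E : Finset (Finset (Fin n))) (A : Finset (Fin n)) :
    Finset (Fin n) := A ∪ (touch E A).biUnion id

variable {n k : ℕ}

lemma mem_nb {E : Finset (Finset (Fin n))} {A : Finset (Fin n)} {v : Fin n} :
    v ∈ nb E A ↔ v ∈ A ∨ ∃ e ∈ E, (∃ x ∈ e, x ∈ A) ∧ v ∈ e := by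
  simp only [nb, touch, Finset.mem_union, Finset.mem_biUnion, Finset.mem_filter, id,
    Finset.Nonempty, Finset.mem_inter]
  constructor
  · rintro (h | ⟨e, ⟨h1, x, h2, h3⟩, h4⟩)
    · exact Or.inl h
    · exact Or.inr ⟨e, h1, ⟨x, h2, h3⟩, h4⟩
  · rintro (h | ⟨e, h1, ⟨x, h2, h3⟩, h4⟩)
    · exact Or.inl h
    · exact Or.inr ⟨e, ⟨h1, x, h2, h3⟩, h4⟩

lemma subset_nb (E : Finset (Finset (Fin n))) (A : Finset (Fin n)) : A ⊆ nb E A :=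
  Finset.subset_union_left

lemma nb_mono (E : Finset (Finset (Fin n))) {A B : Finset (Fin n)} (h : A ⊆ B) :
    nb E A ⊆ nb E B := by
  intro v hv
  rw [mem_nb] at hv ⊢
  rcases hv with hv | ⟨e, h1, ⟨x, h2, h3⟩, h4⟩
  · exact Or.inl (h hv)
  · exact Or.inr ⟨e, h1, ⟨x, h2, h h3⟩, h4⟩

lemma nbi_mono (E : Finset (Finset (Fin n))) {A B : Finset (Fin n)} (h : A ⊆ B) (r : ℕ) :
    (nb E)^[r] A ⊆ (nb E)^[r] B := by
  induction r with
  | zero => exact h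
  | succ r ih =>
    rw [Function.iterate_succ_apply', Function.iterate_succ_apply']
    exact nb_mono E ih

lemma nbi_subset_succ (E : Finset (Finset (Fin n))) (A : Finset (Fin n)) (r : ℕ) :
    (nb E)^[r] A ⊆ (nb E)^[r+1] A := by
  rw [Function.iterate_succ_apply']
  exact subset_nb _ _

lemma nbi_subset_le (E : Finset (Finset (Fin n))) (A : Finset (Fin n)) {r s : ℕ} (h : r ≤ s) :
    (nb E)^[r] A ⊆ (nb E)^[s] A := by
  induction s, h using Nat.le_induction with
  | base => exact Finset.Subset.refl _
  | succ s _ ih => exact ih.trans (nbi_subset_succ E A s)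

lemma nbi_empty (E : Finset (Finset (Fin n))) (r : ℕ) : (nb E)^[r] ∅ = ∅ := by
  induction r with
  | zero => rfl
  | succ r ih =>
    rw [Function.iterate_succ_apply', ih]
    simp [nb, touch]

lemma nb_symm (E : Finset (Finset (Fin n))) (A B : Finset (Fin n)) :
    (∃ x ∈ A, x ∈ nb E B) ↔ ∃ x ∈ nb E A, x ∈ B := by
  constructor
  · rintro ⟨x, hA, hx⟩
    rw [mem_nb] at hx
    rcases hx with hx | ⟨e, he, ⟨y, hy, hyB⟩, hxe⟩
    · exact ⟨x, subset_nb _ _ hA, hx⟩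
    · exact ⟨y, mem_nb.2 (Or.inr ⟨e, he, ⟨x, hxe, hA⟩, hy⟩), hyB⟩
  · rintro ⟨x, hx, hB⟩
    rw [mem_nb] at hx
    rcases hx with hx | ⟨e, he, ⟨y, hy, hyB⟩, hxe⟩
    · exact ⟨x, hx, subset_nb _ _ hB⟩
    · exact ⟨y, hyB, mem_nb.2 (Or.inr ⟨e, he, ⟨x, hxe, hB⟩, hy⟩)⟩

lemma nbi_symm (E : Finset (Finset (Fin n))) (A B : Finset (Fin n)) (r : ℕ) :
    (∃ x ∈ A, x ∈ (nb E)^[r] B) ↔ ∃ x ∈ (nb E)^[r] A, x ∈ B := by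
  induction r generalizing A B with
  | zero => simp
  | succ r ih =>
    rw [Function.iterate_succ_apply', Function.iterate_succ_apply, nb_symm, ih]

/-- the distance condition in terms of paths -/
lemma dist_le_iff (G : KGraph n k) (x y : Fin n) (r : ℕ) :
    G.dist x y ≤ (r : ℕ∞) ↔ x = y ∨ ∃ l, G.IsLoosePath x y l ∧ l.length ≤ r := by
  unfold dist
  split_ifs with h
  · simp [h]
  · simp only [h, false_or]
    constructor
    · intro hh
      by_contra hcon
      push Not at hcon
      have : ((r + 1 : ℕ) : ℕ∞) ≤
          sInf ((fun l : List (Finset (Fin n)) => (l.length : ℕ∞)) '' {l | G.IsLoosePath x y l}) := by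
        apply le_sInf
        rintro _ ⟨l, hl, rfl⟩
        have h5 : r + 1 ≤ l.length := hcon l hl
        change ((r + 1 : ℕ) : ℕ∞) ≤ (l.length : ℕ∞)
        exact_mod_cast h5
      have h2 := this.trans hh
      have h3 : r + 1 ≤ r := by exact_mod_cast h2
      omega
    · rintro ⟨l, hl, hlr⟩
      have h5 : (l.length : ℕ∞) ≤ (r : ℕ∞) := by exact_mod_cast hlr
      refine le_trans (sInf_le ?_) h5
      exact Set.mem_image_of_mem (fun l : List (Finset (Fin n)) => (l.length : ℕ∞)) hl

lemma path_iff (G : KGraph n k) (A : Finset (Fin n)) (y : Fin n) (r : ℕ) :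
    (∃ x ∈ A, x = y ∨ ∃ l, G.IsLoosePath x y l ∧ l.length ≤ r) ↔ y ∈ (nb G.edges)^[r] A := by
  induction r generalizing A with
  | zero =>
    constructor
    · rintro ⟨x, hx, rfl | ⟨l, hl, hl0⟩⟩
      · exact hx
      · have : l = [] := List.length_eq_zero_iff.1 (Nat.le_zero.1 hl0)
        exact absurd this hl.1
    · intro h; exact ⟨y, h, Or.inl rfl⟩
  | succ r ih =>
    rw [Function.iterate_succ_apply, ← ih]
    constructor
    · rintro ⟨x, hx, rfl | ⟨l, ⟨hne, hE, hh, hlast, hch⟩, hlen⟩⟩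
      · exact ⟨x, subset_nb _ _ hx, Or.inl rfl⟩
      · cases l with
        | nil => exact absurd rfl hne
        | cons e l =>
          have hxe : x ∈ e := hh e (by simp)
          have heE : e ∈ G.edges := hE e (by simp)
          cases l with
          | nil =>
            have hye : y ∈ e := hlast e (by simp)
            exact ⟨y, mem_nb.2 (Or.inr ⟨e, heE, ⟨x, hxe, hx⟩, hye⟩), Or.inl rfl⟩
          | cons f l =>
            have hch' := List.isChain_cons_cons.1 hch
            obtain ⟨z, hz⟩ := hch'.1
            rw [Finset.mem_inter] at hz
            refine ⟨z, mem_nb.2 (Or.inr ⟨e, heE, ⟨x, hxe, hx⟩, hz.1⟩), Or.inr ⟨f :: l, ⟨by simp, ?_, ?_, ?_, hch'.2⟩, ?_⟩⟩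
            · intro g hg; exact hE g (List.mem_cons_of_mem _ hg)
            · intro g hg
              simp at hg
              rw [← hg]; exact hz.2
            · intro g hg; apply hlast g; simpa using hg
            · simp at hlen ⊢; omega
    · rintro ⟨x, hx, hxy⟩
      rw [mem_nb] at hx
      rcases hx with hx | ⟨e, he, ⟨z, hze, hzA⟩, hxe⟩
      · refine ⟨x, hx, ?_⟩
        rcases hxy with h | ⟨l, hl, hlen⟩
        · exact Or.inl h
        · exact Or.inr ⟨l, hl, by omega⟩
      · refine ⟨z, hzA, Or.inr ?_⟩
        rcases hxy with rfl | ⟨l, ⟨hne, hE, hh, hlast, hch⟩, hlen⟩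
        · refine ⟨[e], ⟨by simp, by simpa using he, by simpa using hze, by simpa using hxe, ?_⟩, by simp⟩
          exact List.isChain_singleton _
        · cases l with
          | nil => exact absurd rfl hne
          | cons f l =>
            refine ⟨e :: f :: l, ⟨by simp, ?_, by simpa using hze, ?_, ?_⟩, ?_⟩
            · intro g hg
              rcases List.mem_cons.1 hg with rfl | hg
              · exact he
              · exact hE g hg
            · intro g hg; apply hlast g; simpa using hg
            · exact List.isChain_cons_cons.2 ⟨⟨x, Finset.mem_inter.2 ⟨hxe, hh f (by simp)⟩⟩, hch⟩
            · simp at hlen ⊢; omega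

lemma setDist_le_iff (G : KGraph n k) (A : Finset (Fin n)) (y : Fin n) (r : ℕ) :
    G.setDist (A : Set (Fin n)) {y} ≤ (r : ℕ∞) ↔ y ∈ (nb G.edges)^[r] A := by
  rw [← path_iff]
  simp only [← dist_le_iff]
  unfold setDist
  simp only [Set.mem_singleton_iff, iInf_iInf_eq_left]
  constructor
  · intro h
    by_contra hcon
    push Not at hcon
    have h1 : ((r + 1 : ℕ) : ℕ∞) ≤ ⨅ x ∈ (A : Set (Fin n)), G.dist x y := by
      refine le_iInf₂ fun x hx => ?_
      have := hcon x hx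
      have h2 := Order.add_one_le_of_lt this
      exact_mod_cast h2
    have h2 := h1.trans h
    have h3 : r + 1 ≤ r := by exact_mod_cast h2
    omega
  · rintro ⟨x, hx, h⟩
    exact (iInf₂_le x (by exact_mod_cast hx)).trans h

lemma vNhd_eq (G : KGraph n k) (A : Finset (Fin n)) (r : ℕ) :
    G.vNhd (A : Set (Fin n)) r = ((nb G.edges)^[r] A : Finset (Fin n)) := by
  ext v
  simp only [vNhd, Set.mem_ofPred_eq, setDist_le_iff, Finset.mem_coe]

lemma vNhd_ncard (G : KGraph n k) (A : Finset (Fin n)) (r : ℕ) :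
    (G.vNhd (A : Set (Fin n)) r).ncard = ((nb G.edges)^[r] A).card := by
  rw [vNhd_eq, Set.ncard_coe_finset]

lemma eNhd_eq (G : KGraph n k) (v : Fin n) (r : ℕ) :
    G.eNhd {v} r = (touch G.edges ((nb G.edges)^[r-1] {v}) : Finset (Finset (Fin n))) := by
  ext e
  simp only [eNhd, Set.mem_ofPred_eq, setDist_le_iff, Finset.mem_coe, touch, Finset.mem_filter]
  have h := nbi_symm G.edges {v} e (r-1)
  have h' := nbi_symm G.edges e {v} (r-1)
  simp only [Finset.mem_singleton, exists_eq_left] at h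
  refine and_congr_right fun _ => ?_
  rw [h]
  constructor
  · rintro ⟨x, h1, h2⟩; exact ⟨x, Finset.mem_inter.2 ⟨h2, h1⟩⟩
  · rintro ⟨x, hx⟩; rw [Finset.mem_inter] at hx; exact ⟨x, hx.2, hx.1⟩

lemma eNhd_ncard (G : KGraph n k) (v : Fin n) (r : ℕ) :
    (G.eNhd {v} r).ncard = (touch G.edges ((nb G.edges)^[r-1] {v})).card := by
  rw [eNhd_eq, Set.ncard_coe_finset]

lemma avgDeg_eq (G : KGraph n k) :
    G.avgDeg = (∑ v : Fin n, ((nb G.edges {v}).card : ℝ)) / n := by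
  unfold avgDeg
  congr 1
  refine Finset.sum_congr rfl fun v _ => ?_
  have := vNhd_ncard G {v} 1
  rw [Finset.coe_singleton] at this
  rw [this]; rfl

end KGraph


namespace KGraph
open Classical

/-- The deterministic conditions which hold with high probability. -/
structure Good (n k : ℕ) (D l : ℝ) (E : Finset (Finset (Fin n))) : Prop where
  unif : ∀ e ∈ E, e.card = k
  hl : l = Real.log n
  hl100 : 100 ≤ l
  hk : l ≤ k
  hD : l ^ 3 ≤ D
  hM : D * k ≤ n
  H1 : ∀ v, ((E.filter (fun e => v ∈ e)).card : ℝ) ≤ (1 + 1 / l) * D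
  H2 : ∀ A : Finset (Fin n), A.Nonempty → (A.card : ℝ) * (D * k) ≤ n →
    (1 - 2 / l) * (A.card * D) ≤ ((touch E A).card : ℝ)
  H3 : ∀ F ⊆ E, F.Nonempty → (k * F.card : ℝ) < n →
    ((k * F.card : ℝ) - ((F.biUnion id).card : ℝ)) * Real.log (n / (k * F.card)) ≤ 2 * (k * F.card)

namespace Good

variable {n k : ℕ} {D l : ℝ} {E : Finset (Finset (Fin n))}

lemma lpos (h : Good n k D l E) : 0 < l := by linarith [h.hl100]
lemma kpos (h : Good n k D l E) : (0 : ℝ) < k := by linarith [h.hl100, h.hk]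
lemma lD (h : Good n k D l E) : l ≤ D := by
  have := h.hD
  have h1 := h.hl100
  nlinarith [sq_nonneg l, mul_pos h.lpos h.lpos]
lemma Dpos (h : Good n k D l E) : 0 < D := h.lpos.trans_le h.lD
lemma Mpos (h : Good n k D l E) : 0 < D * k := mul_pos h.Dpos h.kpos
lemma npos (h : Good n k D l E) : (0 : ℝ) < n := h.Mpos.trans_le h.hM
lemma lM (h : Good n k D l E) : l ^ 4 ≤ D * k := by
  have h1 := h.hD
  have h2 := h.hk
  calc l ^ 4 = l ^ 3 * l := by ring
    _ ≤ D * k := by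
      apply mul_le_mul h1 h2 h.lpos.le h.Dpos.le
lemma il (h : Good n k D l E) : 1 / l ≤ 1 / 100 := by
  apply one_div_le_one_div_of_le (by norm_num) h.hl100
lemma ilpos (h : Good n k D l E) : 0 < 1 / l := by have := h.lpos; positivity
lemma nexp (h : Good n k D l E) : (n : ℝ) = Real.exp l := by
  rw [h.hl, Real.exp_log h.npos]

lemma ov (h : Good n k D l E) {F : Finset (Finset (Fin n))} (hF : F ⊆ E) (hne : F.Nonempty)
    {lam : ℝ} (hlam : 0 < lam) (hb : (k * F.card : ℝ) * Real.exp lam ≤ n) :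
    (k * F.card : ℝ) * (1 - 2 / lam) ≤ ((F.biUnion id).card : ℝ) := by
  have hFpos : (0 : ℝ) < F.card := by exact_mod_cast hne.card_pos
  have hkb : (0 : ℝ) < k * F.card := mul_pos h.kpos hFpos
  have he : 1 < Real.exp lam := by
    rw [← Real.exp_zero]; exact Real.exp_lt_exp.2 hlam
  have hlt : (k * F.card : ℝ) < n := by nlinarith
  have h3 := h.H3 F hF hne hlt
  have hlog : lam ≤ Real.log (n / (k * F.card)) := by
    rw [Real.le_log_iff_exp_le (div_pos h.npos hkb), le_div_iff₀ hkb]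
    linarith
  have hs : ((F.biUnion id).card : ℝ) ≤ k * F.card := by
    have : (F.biUnion id).card ≤ F.card * k := by
      apply Finset.card_biUnion_le_card_mul
      intro e he
      exact (h.unif e (hF he)).le
    have h5 : ((F.biUnion id).card : ℝ) ≤ F.card * k := by exact_mod_cast this
    linarith
  have h4 : ((k * F.card : ℝ) - ((F.biUnion id).card : ℝ)) * lam ≤ 2 * (k * F.card) :=
    (mul_le_mul_of_nonneg_left hlog (by linarith)).trans h3
  have h6 : ((k * F.card : ℝ) - ((F.biUnion id).card : ℝ)) ≤ 2 * (k * F.card) / lam := by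
    rw [le_div_iff₀ hlam]; exact h4
  have h7 : (k * F.card : ℝ) * (1 - 2 / lam) = k * F.card - 2 * (k * F.card) / lam := by
    field_simp
  rw [h7]; linarith

lemma touch_card_le (h : Good n k D l E) (A : Finset (Fin n)) :
    ((touch E A).card : ℝ) ≤ (1 + 1 / l) * D * A.card := by
  have hsub : touch E A ⊆ A.biUnion (fun v => E.filter (fun e => v ∈ e)) := by
    intro e he
    simp only [touch, Finset.mem_filter] at he
    obtain ⟨heE, x, hx⟩ := he
    rw [Finset.mem_inter] at hx
    simp only [Finset.mem_biUnion, Finset.mem_filter]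
    exact ⟨x, hx.2, heE, hx.1⟩
  have h1 : (touch E A).card ≤ ∑ v ∈ A, (E.filter (fun e => v ∈ e)).card :=
    (Finset.card_le_card hsub).trans Finset.card_biUnion_le
  have h2 : ((touch E A).card : ℝ) ≤ ∑ v ∈ A, ((E.filter (fun e => v ∈ e)).card : ℝ) := by
    exact_mod_cast h1
  refine h2.trans ((Finset.sum_le_sum fun v _ => h.H1 v).trans ?_)
  rw [Finset.sum_const, nsmul_eq_mul]
  linarith

lemma touch_subset (E : Finset (Finset (Fin n))) (A : Finset (Fin n)) : touch E A ⊆ E :=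
  Finset.filter_subset _ _

lemma nb_card_le (h : Good n k D l E) (A : Finset (Fin n)) :
    ((nb E A).card : ℝ) ≤ A.card * ((1 + 2 / l) * (D * k)) := by
  have h1 : (nb E A).card ≤ A.card + (touch E A).card * k := by
    refine (Finset.card_union_le _ _).trans (Nat.add_le_add_left ?_ _)
    apply Finset.card_biUnion_le_card_mul
    intro e he
    exact (h.unif e (touch_subset E A he)).le
  have h2 : ((nb E A).card : ℝ) ≤ A.card + (touch E A).card * k := by exact_mod_cast h1
  have h3 := h.touch_card_le A
  have h4 : ((touch E A).card : ℝ) * k ≤ (1 + 1 / l) * D * A.card * k :=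
    mul_le_mul_of_nonneg_right h3 h.kpos.le
  have h5 : 1 ≤ (1 / l) * (D * k) := by
    have h6 := h.lD
    have h7 : 1 ≤ (k : ℝ) := by linarith [h.hk, h.hl100]
    rw [div_mul_eq_mul_div, one_mul, le_div_iff₀ h.lpos]
    nlinarith [h.Dpos]
  have hA : (0 : ℝ) ≤ A.card := Nat.cast_nonneg _
  have e2 : 2 / l = 1 / l + 1 / l := by ring
  rw [e2]
  nlinarith

lemma nbi_card_le (h : Good n k D l E) (A : Finset (Fin n)) (r : ℕ) :
    (((nb E)^[r] A).card : ℝ) ≤ A.card * ((1 + 2 / l) * (D * k)) ^ r := by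
  induction r with
  | zero => simp
  | succ r ih =>
    rw [Function.iterate_succ_apply']
    refine (h.nb_card_le _).trans ?_
    rw [pow_succ, ← mul_assoc (A.card : ℝ)]
    apply mul_le_mul_of_nonneg_right ih
    have := h.Mpos
    have := h.lpos
    positivity

/-- Sharp one-step expansion. -/
lemma sharp (h : Good n k D l E) {A : Finset (Fin n)} (hA : A.Nonempty) {lam : ℝ} (hlam : 2 ≤ lam)
    (hb : 2 * (A.card * (D * k)) * Real.exp lam ≤ n) :
    (1 - 2 / l - 2 / lam) * (A.card * (D * k)) ≤ ((nb E A).card : ℝ) := by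
  have ha : (0 : ℝ) < A.card := by exact_mod_cast hA.card_pos
  have haM : 0 < A.card * (D * k) := mul_pos ha h.Mpos
  have he : 1 < Real.exp lam := by
    rw [← Real.exp_zero]; exact Real.exp_lt_exp.2 (by linarith)
  have h2 := h.H2 A hA (by nlinarith)
  have h1 := h.touch_card_le A
  have hil := h.il
  have hil0 := h.ilpos
  have e2 : 2 / l = 2 * (1 / l) := by ring
  have hbpos : (0 : ℝ) < (touch E A).card := by
    refine lt_of_lt_of_le ?_ h2
    apply mul_pos
    · rw [e2]; linarith
    · exact mul_pos ha h.Dpos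
  have hne : (touch E A).Nonempty := Finset.card_pos.1 (by exact_mod_cast hbpos)
  have hkb : (k * (touch E A).card : ℝ) ≤ 2 * (A.card * (D * k)) := by
    have h3 : (k : ℝ) * (touch E A).card ≤ k * ((1 + 1 / l) * D * A.card) :=
      mul_le_mul_of_nonneg_left h1 h.kpos.le
    nlinarith
  have h4 := h.ov (touch_subset E A) hne (lam := lam) (by linarith)
    ((mul_le_mul_of_nonneg_right hkb (by linarith)).trans hb)
  have h5 : (((touch E A).biUnion id).card : ℝ) ≤ (nb E A).card := by
    exact_mod_cast Finset.card_le_card Finset.subset_union_right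
  refine le_trans ?_ (h4.trans h5)
  have hx : 0 ≤ 1 - 2 / lam := by
    have : 2 / lam ≤ 1 := by rw [div_le_one (by linarith)]; exact hlam
    linarith
  have h6 : (1 - 2 / l) * (A.card * (D * k)) ≤ k * (touch E A).card := by
    have := mul_le_mul_of_nonneg_left h2 h.kpos.le
    linarith
  have h7 := mul_le_mul_of_nonneg_right h6 hx
  refine le_trans ?_ h7
  have h8 : 0 ≤ 2 / l * (2 / lam) := by
    have := h.lpos
    positivity
  nlinarith

/-- bounded-loss selection of edges. -/
lemma edges_cover (h : Good n k D l E) {F : Finset (Finset (Fin n))} (hF : F ⊆ E)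
    (hne : F.Nonempty) :
    Real.exp (-6) / 4 * min (k * F.card : ℝ) n ≤ ((F.biUnion id).card : ℝ) := by
  have hkpos := h.kpos
  have hnpos := h.npos
  have hFpos : 1 ≤ F.card := hne.card_pos
  set x : ℝ := Real.exp (-6) * n / k with hx
  have hepos : 0 < Real.exp (-6) := Real.exp_pos _
  have hx1 : 1 ≤ x := by
    have h1 : Real.exp 6 ≤ 1000 := by
      have := Real.exp_one_lt_d9
      have h2 : Real.exp 6 = Real.exp 1 ^ 6 := by rw [← Real.exp_nat_mul]; norm_num
      rw [h2]
      calc Real.exp 1 ^ 6 ≤ 2.72 ^ 6 := by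
            apply pow_le_pow_left₀ (Real.exp_pos _).le; linarith
        _ ≤ 1000 := by norm_num
    have h2 : 1000 ≤ D := by
      have := h.hD
      have h3 := pow_le_pow_left₀ (by norm_num) h.hl100 3
      norm_num at h3; linarith
    have h3 : 1 ≤ Real.exp (-6) * D := by
      rw [Real.exp_neg]
      rw [← div_eq_inv_mul, le_div_iff₀ (Real.exp_pos _)]
      linarith
    rw [hx, le_div_iff₀ hkpos]
    have := h.hM
    nlinarith
  have hfl1 : 1 ≤ ⌊x⌋₊ := Nat.le_floor (by exact_mod_cast hx1)
  have hfl2 : x / 2 ≤ (⌊x⌋₊ : ℝ) := by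
    have h1 := Nat.lt_floor_add_one x
    have h2 : (1 : ℝ) ≤ ⌊x⌋₊ := by exact_mod_cast hfl1
    linarith
  have hfl3 : (⌊x⌋₊ : ℝ) ≤ x := Nat.floor_le (by linarith)
  obtain ⟨F', hF'F, hF'c⟩ := Finset.exists_subset_card_eq (min_le_left F.card ⌊x⌋₊)
  have hF'ne : F'.Nonempty := Finset.card_pos.1 (by rw [hF'c]; exact lt_min hFpos hfl1)
  have hkx : k * x = Real.exp (-6) * n := by rw [hx]; field_simp
  have hup : (k * F'.card : ℝ) * Real.exp 6 ≤ n := by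
    have h1 : (F'.card : ℝ) ≤ x := by
      refine le_trans ?_ hfl3
      rw [hF'c]; exact_mod_cast min_le_right _ _
    have h2 : (k * F'.card : ℝ) ≤ Real.exp (-6) * n := by
      rw [← hkx]; exact mul_le_mul_of_nonneg_left h1 hkpos.le
    calc (k * F'.card : ℝ) * Real.exp 6 ≤ Real.exp (-6) * n * Real.exp 6 :=
          mul_le_mul_of_nonneg_right h2 (Real.exp_pos _).le
      _ = n * (Real.exp (-6) * Real.exp 6) := by ring
      _ = n := by rw [← Real.exp_add]; simp
  have h1 := h.ov (hF'F.trans hF) hF'ne (lam := 6) (by norm_num) hup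
  have h2 : ((F'.biUnion id).card : ℝ) ≤ (F.biUnion id).card := by
    exact_mod_cast Finset.card_le_card (Finset.biUnion_subset_biUnion_of_subset_left id hF'F)
  have h3 : min (F.card : ℝ) (x / 2) ≤ F'.card := by
    rw [hF'c, Nat.cast_min]
    exact min_le_min le_rfl hfl2
  have hele : Real.exp (-6) ≤ 1 := by rw [← Real.exp_zero]; exact Real.exp_le_exp.2 (by norm_num)
  have h4 : Real.exp (-6) / 2 * min (k * F.card : ℝ) n ≤ k * F'.card := by
    rcases min_le_iff.1 h3 with h5 | h5
    · have : min (k * F.card : ℝ) n ≤ k * F.card := min_le_left _ _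
      have h6 : (k : ℝ) * F.card ≤ k * F'.card := mul_le_mul_of_nonneg_left h5 hkpos.le
      have h7 : (0 : ℝ) ≤ k * F.card := by positivity
      nlinarith
    · have : min (k * F.card : ℝ) n ≤ n := min_le_right _ _
      have h6 : (k : ℝ) * (x / 2) ≤ k * F'.card := mul_le_mul_of_nonneg_left h5 hkpos.le
      have h7 : (k : ℝ) * (x / 2) = Real.exp (-6) / 2 * n := by
        rw [← mul_div_assoc, hkx]; ring
      nlinarith
  have h8 : (0 : ℝ) ≤ k * F'.card := by positivity
  nlinarith

/-- one-step expansion with a constant loss -/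
lemma crude (h : Good n k D l E) {A : Finset (Fin n)} (hA : A.Nonempty)
    (hb : A.card * (D * k) ≤ n) :
    Real.exp (-6) / 8 * (A.card * (D * k)) ≤ ((nb E A).card : ℝ) := by
  have ha : (0 : ℝ) < A.card := by exact_mod_cast hA.card_pos
  have haM : 0 < A.card * (D * k) := mul_pos ha h.Mpos
  have h2 := h.H2 A hA hb
  have hil := h.il
  have e2 : 2 / l = 2 * (1 / l) := by ring
  have haD := mul_pos ha h.Dpos
  have h3 : 1 / 2 * (A.card * D) ≤ (touch E A).card := by
    refine le_trans ?_ h2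
    apply mul_le_mul_of_nonneg_right _ haD.le
    rw [e2]; linarith
  have hne : (touch E A).Nonempty := Finset.card_pos.1 (by
    have : (0 : ℝ) < (touch E A).card := by linarith
    exact_mod_cast this)
  have h4 := h.edges_cover (touch_subset E A) hne
  have h5 : (((touch E A).biUnion id).card : ℝ) ≤ (nb E A).card := by
    exact_mod_cast Finset.card_le_card Finset.subset_union_right
  refine le_trans ?_ (h4.trans h5)
  have h6 : 1 / 2 * (A.card * (D * k)) ≤ min (k * (touch E A).card : ℝ) n := by
    apply le_min
    · have := mul_le_mul_of_nonneg_left h3 h.kpos.le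
      linarith
    · linarith
  have hepos : 0 < Real.exp (-6) := Real.exp_pos _
  nlinarith

lemma nbi_nonempty {A : Finset (Fin n)} (hA : A.Nonempty) (r : ℕ) : ((nb E)^[r] A).Nonempty :=
  hA.mono (nbi_subset_le E A (Nat.zero_le r))

lemma logM (h : Good n k D l E) : 4 * Real.log l ≤ Real.log (D * k) := by
  have := Real.log_le_log (by have := h.lpos; positivity) h.lM
  rw [Real.log_pow] at this
  exact_mod_cast this

lemma logl (h : Good n k D l E) : 4 ≤ Real.log l := by
  rw [Real.le_log_iff_exp_le h.lpos]
  refine le_trans ?_ h.hl100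
  have := Real.exp_one_lt_d9
  have h2 : Real.exp 4 = Real.exp 1 ^ 4 := by rw [← Real.exp_nat_mul]; norm_num
  rw [h2]
  calc Real.exp 1 ^ 4 ≤ 2.72 ^ 4 := by
        apply pow_le_pow_left₀ (Real.exp_pos _).le; linarith
    _ ≤ 100 := by norm_num

lemma pow_two_le (h : Good n k D l E) {r : ℕ} (hr : (r : ℝ) ≤ l) :
    (1 + 2 / l) ^ r ≤ 8 := by
  have hl := h.lpos
  have h1 : 1 + 2 / l ≤ Real.exp (2 / l) := by linarith [Real.add_one_le_exp (2 / l)]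
  calc (1 + 2 / l) ^ r ≤ Real.exp (2 / l) ^ r := pow_le_pow_left₀ (by positivity) h1 r
    _ = Real.exp (r * (2 / l)) := by rw [← Real.exp_nat_mul]
    _ ≤ Real.exp 2 := by
      apply Real.exp_le_exp.2
      rw [← mul_div_assoc, div_le_iff₀ hl]; linarith
    _ = Real.exp 1 ^ 2 := by rw [← Real.exp_nat_mul]; norm_num
    _ ≤ 2.72 ^ 2 := by
      apply pow_le_pow_left₀ (Real.exp_pos _).le
      linarith [Real.exp_one_lt_d9]
    _ ≤ 8 := by norm_num

lemma r_le (h : Good n k D l E) {r : ℕ} (hr : (D * k) ^ r ≤ n) :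
    r * Real.log (D * k) ≤ l := by
  have := Real.log_le_log (pow_pos h.Mpos r) hr
  rwa [Real.log_pow, ← h.hl] at this

lemma r_le' (h : Good n k D l E) {r : ℕ} (hr : (D * k) ^ r ≤ n) : (r : ℝ) ≤ l := by
  have h1 := h.r_le hr
  have h2 := h.logM
  have h3 := h.logl
  have : (0 : ℝ) ≤ r := Nat.cast_nonneg _
  nlinarith

lemma loss_sum (h : Good n k D l E) {r : ℕ} (hr : (D * k) ^ r ≤ n) :
    ∑ i ∈ Finset.range r, (2 / l + 2 / (24 + ((r - 1 - i : ℕ) : ℝ) * Real.log (D * k))) ≤ 7 / 8 := by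
  have hlog := h.logM
  have hll := h.logl
  have hl := h.lpos
  have hr1 := h.r_le hr
  have hr2 := h.r_le' hr
  set L := Real.log (D * k) with hL
  have hLpos : 0 < L := by linarith
  rw [Finset.sum_add_distrib, Finset.sum_const, Finset.card_range, nsmul_eq_mul]
  have e1 := Finset.sum_range_reflect (fun j : ℕ => 2 / (24 + (j : ℝ) * L)) r
  rw [e1]
  have h1 : (r : ℝ) * (2 / l) ≤ 2 / L := by
    rw [← mul_div_assoc, div_le_div_iff₀ hl hLpos]; linarith
  have h2 : ∑ j ∈ Finset.range r, 2 / (24 + (j : ℝ) * L) ≤ 1 / 12 + 2 * (1 + Real.log l) / L := by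
    cases r with
    | zero => 
      simp only [Finset.range_zero, Finset.sum_empty]
      have : 0 ≤ 1 + Real.log l := by linarith
      positivity
    | succ m =>
      rw [Finset.sum_range_succ']
      have h3 : ∑ j ∈ Finset.range m, 2 / (24 + ((j + 1 : ℕ) : ℝ) * L) ≤
          ∑ j ∈ Finset.range m, 2 / L * ((j : ℝ) + 1)⁻¹ := by
        apply Finset.sum_le_sum
        intro j _
        have hj : (0 : ℝ) < (j : ℝ) + 1 := by positivity
        rw [div_mul_eq_mul_div, mul_comm (2 : ℝ), ← div_eq_inv_mul, div_div]
        apply div_le_div_of_nonneg_left (by norm_num) (by positivity)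
        push_cast; linarith
      rw [← Finset.mul_sum] at h3
      have h4 : ∑ j ∈ Finset.range m, ((j : ℝ) + 1)⁻¹ ≤ 1 + Real.log l := by
        have h5 := harmonic_le_one_add_log m
        have h6 : ((harmonic m : ℚ) : ℝ) = ∑ j ∈ Finset.range m, ((j : ℝ) + 1)⁻¹ := by
          unfold harmonic; push_cast; rfl
        rw [← h6]
        refine h5.trans ?_
        rcases Nat.eq_zero_or_pos m with h7 | h7
        · rw [h7]; simp; linarith
        · have : Real.log m ≤ Real.log l := by
            apply Real.log_le_log (by exact_mod_cast h7)
            push_cast at hr2; linarith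
          linarith
      have h8 := mul_le_mul_of_nonneg_left h4 (by positivity : 0 ≤ 2 / L)
      have h9 : 2 / L * (1 + Real.log l) = 2 * (1 + Real.log l) / L := by ring
      have h10 : 2 / (24 + ((0 : ℕ) : ℝ) * L) = 1 / 12 := by norm_num
      rw [h10]
      linarith
  have h3 : 2 * (1 + Real.log l) / L ≤ 1 / 2 + 2 / L := by
    have : 2 * (1 + Real.log l) / L = 2 * Real.log l / L + 2 / L := by ring
    rw [this]
    have : 2 * Real.log l / L ≤ 1 / 2 := by rw [div_le_iff₀ hLpos]; linarith
    linarith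
  have h4 : 2 / L ≤ 1 / 8 := by rw [div_le_iff₀ hLpos]; linarith
  linarith

/-- Iterated expansion below the saturation threshold. -/
lemma iter (h : Good n k D l E) {A : Finset (Fin n)} (hA : A.Nonempty) {r : ℕ}
    (hr : A.card * (D * k) ^ r ≤ Real.exp (-24) / 16 * n) :
    1 / 8 * (A.card * (D * k) ^ r) ≤ (((nb E)^[r] A).card : ℝ) := by
  have ha : (1 : ℝ) ≤ A.card := by exact_mod_cast hA.card_pos
  have hM := h.Mpos
  have hn := h.npos
  have hr0 : (D * k) ^ r ≤ n := by
    have h1 : Real.exp (-24) ≤ 1 := by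
      rw [← Real.exp_zero]; exact Real.exp_le_exp.2 (by norm_num)
    have h2 : 0 < (D * k) ^ r := pow_pos hM r
    nlinarith
  have hrl := h.r_le' hr0
  have hlog := h.logM
  have hll := h.logl
  have key : ∀ i ≤ r, (A.card * (D * k) ^ i) *
      (1 - ∑ i' ∈ Finset.range i, (2 / l + 2 / (24 + ((r - 1 - i' : ℕ) : ℝ) * Real.log (D * k))))
        ≤ (((nb E)^[i] A).card : ℝ) := by
    intro i
    induction i with
    | zero => intro _; simp
    | succ i ih =>
      intro hi
      have ih' := ih (by omega)
      rw [Function.iterate_succ_apply', Finset.sum_range_succ]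
      set lam : ℝ := 24 + ((r - 1 - i : ℕ) : ℝ) * Real.log (D * k) with hlam
      set S := ∑ i' ∈ Finset.range i, (2 / l + 2 / (24 + ((r - 1 - i' : ℕ) : ℝ) * Real.log (D * k)))
        with hS
      have hLpos : 0 < Real.log (D * k) := by linarith
      have hlam24 : 24 ≤ lam := by
        have : 0 ≤ ((r - 1 - i : ℕ) : ℝ) * Real.log (D * k) := by positivity
        linarith
      have hS0 : 0 ≤ S := by
        apply Finset.sum_nonneg
        intro j _
        have := h.lpos
        have : 0 ≤ ((r - 1 - j : ℕ) : ℝ) * Real.log (D * k) := by positivity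
        positivity
      have hcard := h.nbi_card_le A i
      rw [mul_pow] at hcard
      have hp := h.pow_two_le (r := i) (by
        have : (i : ℝ) ≤ r := by exact_mod_cast (by omega)
        linarith)
      have hMi : 0 < (D * k) ^ i := pow_pos hM i
      have hcard2 : (((nb E)^[i] A).card : ℝ) ≤ 8 * (A.card * (D * k) ^ i) := by
        have h1 := mul_le_mul_of_nonneg_right hp (mul_pos (by linarith : (0 : ℝ) < A.card) hMi).le
        linarith
      have hstep := h.sharp (nbi_nonempty (E := E) hA i) (lam := lam) (by linarith) (by
        have e1 : Real.exp lam = Real.exp 24 * (D * k) ^ (r - 1 - i) := by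
          rw [hlam, Real.exp_add, Real.exp_nat_mul, Real.exp_log hM]
        rw [e1]
        have hMj : 0 < (D * k) ^ (r - 1 - i) := pow_pos hM _
        have e2 : (D * k) ^ i * (D * k) * (D * k) ^ (r - 1 - i) = (D * k) ^ r := by
          rw [← pow_succ, ← pow_add]; congr 1; omega
        calc 2 * ((((nb E)^[i] A).card : ℝ) * (D * k)) * (Real.exp 24 * (D * k) ^ (r - 1 - i))
            ≤ 2 * ((8 * (A.card * (D * k) ^ i)) * (D * k)) * (Real.exp 24 * (D * k) ^ (r - 1 - i)) := by
              gcongr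
          _ = 16 * Real.exp 24 * (A.card * ((D * k) ^ i * (D * k) * (D * k) ^ (r - 1 - i))) := by ring
          _ = 16 * Real.exp 24 * (A.card * (D * k) ^ r) := by rw [e2]
          _ ≤ 16 * Real.exp 24 * (Real.exp (-24) / 16 * n) := by gcongr
          _ = (Real.exp 24 * Real.exp (-24)) * n := by ring
          _ = n := by rw [← Real.exp_add]; simp)
      refine le_trans ?_ hstep
      have hx : 0 ≤ 1 - 2 / l - 2 / lam := by
        have e2 : 2 / l = 2 * (1 / l) := by ring
        have := h.il
        have h3 : 2 / lam ≤ 1 / 12 := by rw [div_le_iff₀ (by linarith)]; linarith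
        rw [e2]; linarith
      have hx' : 0 ≤ 2 / l + 2 / lam := by
        have := h.lpos
        positivity
      have h5 := mul_le_mul_of_nonneg_left (mul_le_mul_of_nonneg_right ih' hM.le) hx
      refine le_trans ?_ h5
      have h6 : 0 ≤ A.card * (D * k) ^ (i+1) := by positivity
      have h7 : (1 - 2 / l - 2 / lam) * (A.card * (D * k) ^ i * (1 - S) * (D * k)) =
        A.card * (D * k) ^ (i+1) * ((1 - (2 / l + 2 / lam)) * (1 - S)) := by ring
      rw [h7]
      apply mul_le_mul_of_nonneg_left _ h6
      nlinarith [mul_nonneg hx' hS0]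
  refine le_trans ?_ (key r le_rfl)
  have h1 := h.loss_sum hr0
  have h2 : 0 ≤ A.card * (D * k) ^ r := by positivity
  nlinarith

end Good
end KGraph


namespace KGraph
open Classical
namespace Good

variable {n k : ℕ} {D l : ℝ} {E : Finset (Finset (Fin n))}

lemma lower (h : Good n k D l E) {A : Finset (Fin n)} (hA : A.Nonempty) (r : ℕ) {d : ℝ}
    (hd0 : 0 ≤ d) (hd : d ≤ (1 + 2 / l) * (D * k)) :
    Real.exp (-30) / 1024 * min (A.card * d ^ r) n ≤ (((nb E)^[r] A).card : ℝ) := by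
  have ha : (1 : ℝ) ≤ A.card := by exact_mod_cast hA.card_pos
  have hM := h.Mpos
  have hn := h.npos
  have hnM := h.hM
  have e24 : 0 < Real.exp (-24) := Real.exp_pos _
  have e6 : 0 < Real.exp (-6) := Real.exp_pos _
  have e30 : Real.exp (-30) = Real.exp (-6) * Real.exp (-24) := by rw [← Real.exp_add]; norm_num
  have e24' : Real.exp (-24) ≤ 1 := by rw [← Real.exp_zero]; exact Real.exp_le_exp.2 (by norm_num)
  have e6' : Real.exp (-6) ≤ 1 := by rw [← Real.exp_zero]; exact Real.exp_le_exp.2 (by norm_num)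
  have e30' : Real.exp (-30) ≤ Real.exp (-24) := Real.exp_le_exp.2 (by norm_num)
  have e30p : 0 < Real.exp (-30) := Real.exp_pos _
  have hmin : min (A.card * d ^ r) (n : ℝ) ≤ n := min_le_right _ _
  have hmin' : min (A.card * d ^ r) (n : ℝ) ≤ A.card * d ^ r := min_le_left _ _
  by_cases hcase : A.card * (D * k) ^ r ≤ Real.exp (-24) / 16 * n
  · have h1 := h.iter hA hcase
    have hMr : 0 < (D * k) ^ r := pow_pos hM r
    have hr0 : (D * k) ^ r ≤ n := by nlinarith
    have h2 := h.pow_two_le (h.r_le' hr0)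
    have h3 : d ^ r ≤ 8 * (D * k) ^ r := by
      refine (pow_le_pow_left₀ hd0 hd r).trans ?_
      rw [mul_pow]
      exact mul_le_mul_of_nonneg_right h2 hMr.le
    have h4 : A.card * d ^ r ≤ 8 * (A.card * (D * k) ^ r) := by nlinarith
    have h5 : 0 ≤ A.card * (D * k) ^ r := by positivity
    have h6 : Real.exp (-30) / 1024 * min (A.card * d ^ r) n ≤
        1 / 64 * (8 * (A.card * (D * k) ^ r)) := by
      apply mul_le_mul (by linarith) (hmin'.trans h4) (by positivity) (by norm_num)
    linarith
  · push Not at hcase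
    have hgoal : Real.exp (-30) / 1024 * n ≤ (((nb E)^[r] A).card : ℝ) := by
      by_cases h0 : Real.exp (-24) / 16 * n < A.card
      · have h1 : (A.card : ℝ) ≤ ((nb E)^[r] A).card := by
          exact_mod_cast Finset.card_le_card (nbi_subset_le E A (Nat.zero_le r))
        nlinarith
      · push Not at h0
        have hex : ∃ s, Real.exp (-24) / 16 * n < A.card * (D * k) ^ s := ⟨r, hcase⟩
        obtain ⟨s0, hs0⟩ : ∃ s0, Nat.find hex = s0 + 1 := by
          apply Nat.exists_eq_succ_of_ne_zero
          intro hz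
          have := Nat.find_spec hex
          rw [hz] at this
          simp at this
          linarith
        have hspec := Nat.find_spec hex
        have hmins : ¬ Real.exp (-24) / 16 * n < A.card * (D * k) ^ s0 :=
          Nat.find_min hex (by omega)
        have hler : s0 + 1 ≤ r := by rw [← hs0]; exact Nat.find_min' hex hcase
        rw [hs0] at hspec
        push Not at hmins
        have hit := h.iter hA hmins
        set A' := (nb E)^[s0] A with hA'
        have hA'ne : A'.Nonempty := nbi_nonempty hA s0
        have hx1 : 1 ≤ (n : ℝ) / (D * k) := by rw [le_div_iff₀ hM]; linarith
        have hfl1 : 1 ≤ ⌊(n : ℝ) / (D * k)⌋₊ := Nat.le_floor (by exact_mod_cast hx1)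
        have hfl3 : (⌊(n : ℝ) / (D * k)⌋₊ : ℝ) ≤ n / (D * k) := Nat.floor_le (by linarith)
        have hfl2 : (n : ℝ) / (D * k) / 2 ≤ (⌊(n : ℝ) / (D * k)⌋₊ : ℝ) := by
          have h1 := Nat.lt_floor_add_one ((n : ℝ) / (D * k))
          have h2 : (1 : ℝ) ≤ ⌊(n : ℝ) / (D * k)⌋₊ := by exact_mod_cast hfl1
          linarith
        obtain ⟨A2, hA2, hA2c⟩ := Finset.exists_subset_card_eq
          (min_le_left A'.card ⌊(n : ℝ) / (D * k)⌋₊)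
        have hA2ne : A2.Nonempty :=
          Finset.card_pos.1 (by rw [hA2c]; exact lt_min hA'ne.card_pos hfl1)
        have hup : A2.card * (D * k) ≤ n := by
          have h1 : (A2.card : ℝ) ≤ n / (D * k) := by
            refine le_trans ?_ hfl3
            rw [hA2c]; exact_mod_cast min_le_right _ _
          rwa [le_div_iff₀ hM] at h1
        have hlow : Real.exp (-24) / 128 * n ≤ A2.card * (D * k) := by
          have h1 : (A2.card : ℝ) = min (A'.card : ℝ) (⌊(n : ℝ) / (D * k)⌋₊ : ℝ) := by
            rw [hA2c, Nat.cast_min]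
          rcases min_choice (A'.card : ℝ) (⌊(n : ℝ) / (D * k)⌋₊ : ℝ) with h2 | h2
          · rw [h1, h2]
            have h3 := mul_le_mul_of_nonneg_right hit hM.le
            rw [pow_succ] at hspec
            linarith
          · rw [h1, h2]
            have h3 := mul_le_mul_of_nonneg_right hfl2 hM.le
            have h4 : (n : ℝ) / (D * k) / 2 * (D * k) = n / 2 := by
              rw [div_right_comm, div_mul_cancel₀ _ hM.ne']
            nlinarith
        have hcr := h.crude hA2ne hup
        have hsub : nb E A2 ⊆ (nb E)^[r] A := by
          refine (nb_mono E hA2).trans ?_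
          rw [hA', ← Function.iterate_succ_apply' (nb E) s0 A]
          exact nbi_subset_le E A hler
        have hc : ((nb E A2).card : ℝ) ≤ ((nb E)^[r] A).card := by
          exact_mod_cast Finset.card_le_card hsub
        refine le_trans ?_ (hcr.trans hc)
        rw [e30]
        have := mul_le_mul_of_nonneg_left hlow (by positivity : 0 ≤ Real.exp (-6) / 8)
        linarith
    exact (mul_le_mul_of_nonneg_left hmin (by positivity)).trans hgoal

set_option maxHeartbeats 1000000 in
lemma expanding (h : Good n k D l E) (G : KGraph n k) (hG : G.edges = E) :
    G.IsExpanding (Real.exp (-36) / 4096) := by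
  have hM := h.Mpos
  have hn := h.npos
  have hnM := h.hM
  have hl := h.lpos
  have hl100 := h.hl100
  have hil := h.il
  have hilp := h.ilpos
  have e2 : 2 / l = 2 * (1 / l) := by ring
  have hk := h.kpos
  have hnat : 0 < n := by exact_mod_cast hn
  set d := G.avgDeg with hddef
  have hdeq : d = (∑ v : Fin n, ((nb E {v}).card : ℝ)) / n := by rw [hddef, avgDeg_eq, hG]
  -- bounds for d
  have hdup : d ≤ (1 + 2 / l) * (D * k) := by
    rw [hdeq, div_le_iff₀ hn]
    refine (Finset.sum_le_sum fun v _ => h.nb_card_le {v}).trans ?_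
    simp; linarith
  have hdlow_of : ∀ c : ℝ, (∀ v, c ≤ ((nb E {v}).card : ℝ)) → c ≤ d := by
    intro c hc
    rw [hdeq, le_div_iff₀ hn]
    refine le_trans ?_ (Finset.sum_le_sum fun v _ => hc v)
    simp; linarith
  have e6 : 0 < Real.exp (-6) := Real.exp_pos _
  have hdc : Real.exp (-6) / 8 * (D * k) ≤ d := by
    apply hdlow_of
    intro v
    have := h.crude (A := {v}) (Finset.singleton_nonempty v) (by simpa using hnM)
    simpa using this
  have hDbig : 1000000 ≤ D := by
    have := h.hD
    have h3 := pow_le_pow_left₀ (by norm_num) h.hl100 3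
    norm_num at h3; linarith
  have hexp6 : Real.exp 6 ≤ 1000 := by
    have := Real.exp_one_lt_d9
    have h2 : Real.exp 6 = Real.exp 1 ^ 6 := by rw [← Real.exp_nat_mul]; norm_num
    rw [h2]
    calc Real.exp 1 ^ 6 ≤ 2.72 ^ 6 := by
          apply pow_le_pow_left₀ (Real.exp_pos _).le; linarith
      _ ≤ 1000 := by norm_num
  have hexp6' : 1 / 1000 ≤ Real.exp (-6) := by
    rw [Real.exp_neg, ← one_div]
    exact one_div_le_one_div_of_le (Real.exp_pos _) hexp6
  have hkd : 100 * (k : ℝ) ≤ d := by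
    refine le_trans ?_ hdc
    have : 100 ≤ Real.exp (-6) / 8 * D := by nlinarith
    nlinarith
  have hk1 : 1 ≤ (k : ℝ) := by linarith [h.hk]
  have hd1 : 100 ≤ d := by linarith
  have hd0 : 0 < d := by linarith
  have hDelta : 0 < (1 + 2 / l) * (D * k) := by positivity
  -- comparing powers
  have hpow : ∀ r : ℕ, d ^ r ≤ n →
      ((1 + 2 / l) * (D * k)) ^ r ≤ Real.exp 36 * 4096 * d ^ r := by
    intro r hr
    by_cases hcase : (D * k) ^ 2 ≤ n
    · have hrl : (r : ℝ) ≤ l := by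
        have h1 := Real.log_le_log (pow_pos hd0 r) hr
        rw [Real.log_pow, ← h.hl] at h1
        have h2 : 1 ≤ Real.log d := by
          rw [Real.le_log_iff_exp_le hd0]
          linarith [Real.exp_one_lt_d9]
        have : (0 : ℝ) ≤ r := Nat.cast_nonneg _
        nlinarith
      have hlam : ∀ v, (1 - 8 / l) * (D * k) ≤ ((nb E {v}).card : ℝ) := by
        intro v
        have := h.sharp (A := {v}) (Finset.singleton_nonempty v) (lam := l / 3) (by linarith) (by
          simp only [Finset.card_singleton, Nat.cast_one, one_mul]
          have h1 : D * k ≤ Real.exp (l / 2) := by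
            rw [← abs_of_pos hM, ← abs_of_pos (Real.exp_pos (l / 2))]
            apply sq_le_sq.1
            rw [← Real.exp_nat_mul]
            have : ((2 : ℕ) : ℝ) * (l / 2) = l := by push_cast; ring
            rw [this, ← h.nexp]; exact hcase
          have h2 : 2 ≤ Real.exp (l / 6) := by
            have := Real.add_one_le_exp (l / 6)
            linarith
          calc 2 * (D * k) * Real.exp (l / 3) ≤
              Real.exp (l / 6) * Real.exp (l / 2) * Real.exp (l / 3) := by gcongr
            _ = Real.exp (l / 6 + l / 2 + l / 3) := by rw [Real.exp_add, Real.exp_add]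
            _ = n := by rw [h.nexp]; congr 1; ring)
        simp only [Finset.card_singleton, Nat.cast_one, one_mul] at this
        refine le_trans (le_of_eq ?_) this
        field_simp
        ring
      have hdl := hdlow_of _ hlam
      have h8 : 0 ≤ 1 - 8 / l := by
        have : 8 / l = 8 * (1 / l) := by ring
        rw [this]; linarith
      -- (1+2/l) ≤ exp(18/l) (1-8/l)
      have h9 : 1 + 2 / l ≤ Real.exp (18 / l) * (1 - 8 / l) := by
        have h10 : 18 / l + 1 ≤ Real.exp (18 / l) := Real.add_one_le_exp _
        refine le_trans ?_ (mul_le_mul_of_nonneg_right h10 h8)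
        have a1 : 18 / l = 18 * (1 / l) := by ring
        have a2 : 8 / l = 8 * (1 / l) := by ring
        rw [a1, a2, e2]
        nlinarith
      have h11 : (1 + 2 / l) * (D * k) ≤ Real.exp (18 / l) * d := by
        calc (1 + 2 / l) * (D * k) ≤ Real.exp (18 / l) * (1 - 8 / l) * (D * k) :=
              mul_le_mul_of_nonneg_right h9 hM.le
          _ = Real.exp (18 / l) * ((1 - 8 / l) * (D * k)) := by ring
          _ ≤ _ := mul_le_mul_of_nonneg_left hdl (Real.exp_pos _).le
      refine (pow_le_pow_left₀ hDelta.le h11 r).trans ?_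
      rw [mul_pow]
      apply mul_le_mul_of_nonneg_right _ (pow_pos hd0 r).le
      rw [← Real.exp_nat_mul]
      have h12 : (r : ℝ) * (18 / l) ≤ 36 := by
        rw [← mul_div_assoc, div_le_iff₀ hl]; linarith
      have := Real.exp_le_exp.2 h12
      linarith [Real.exp_pos 36]
    · push Not at hcase
      have hr2 : r ≤ 2 := by
        by_contra hcon
        have h1 : d ^ 3 ≤ n := (pow_le_pow_right₀ (by linarith) (by omega)).trans hr
        have h2 : (1 / 8000 * (D * k)) ^ 3 ≤ n :=
          (pow_le_pow_left₀ (by positivity) (by nlinarith) 3).trans h1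
        have h3 : (D * k) ^ 3 ≤ 8000 ^ 3 * (D * k) ^ 2 := by
          have : (1 / 8000 * (D * k)) ^ 3 = (D * k) ^ 3 / 8000 ^ 3 := by ring
          rw [this, div_le_iff₀ (by norm_num)] at h2
          nlinarith
        have h4 : D * k ≤ 8000 ^ 3 := by
          have h5 : 0 < (D * k) ^ 2 := by positivity
          have h6 : (D * k) ^ 2 * (D * k) ≤ (D * k) ^ 2 * 8000 ^ 3 := by linarith
          exact le_of_mul_le_mul_left h6 h5
        have h7 : (n : ℝ) ≤ (8000 ^ 3) ^ 2 := by
          refine hcase.le.trans (pow_le_pow_left₀ hM.le h4 2)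
        have h8 : (2 : ℝ) ^ 100 ≤ n := by
          rw [h.nexp]
          calc (2 : ℝ) ^ 100 ≤ Real.exp 1 ^ 100 := by
                apply pow_le_pow_left₀ (by norm_num); linarith [Real.exp_one_gt_d9]
            _ = Real.exp 100 := by rw [← Real.exp_nat_mul]; norm_num
            _ ≤ Real.exp l := Real.exp_le_exp.2 hl100
        have h9 : ((8000 : ℝ) ^ 3) ^ 2 < 2 ^ 100 := by norm_num
        linarith
      have h1 : (1 + 2 / l) * (D * k) ≤ (16 * Real.exp 6) * d := by
        have h2 : (1 + 2 / l) * (D * k) ≤ 2 * (D * k) :=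
          mul_le_mul_of_nonneg_right (by rw [e2]; linarith) hM.le
        have h3 := mul_le_mul_of_nonneg_left hdc (by positivity : 0 ≤ 16 * Real.exp 6)
        have h4 : Real.exp 6 * Real.exp (-6) = 1 := by rw [← Real.exp_add]; simp
        have h5 : 16 * Real.exp 6 * (Real.exp (-6) / 8 * (D * k)) =
          2 * (Real.exp 6 * Real.exp (-6)) * (D * k) := by ring
        rw [h5, h4] at h3
        linarith
      refine (pow_le_pow_left₀ hDelta.le h1 r).trans ?_
      rw [mul_pow]
      apply mul_le_mul_of_nonneg_right _ (pow_pos hd0 r).le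
      have h2 : 1 ≤ 16 * Real.exp 6 := by
        have := Real.add_one_le_exp (6 : ℝ)
        linarith
      refine (pow_le_pow_right₀ h2 hr2).trans ?_
      rw [mul_pow, ← Real.exp_nat_mul]
      have h3 : Real.exp (((2 : ℕ) : ℝ) * 6) ≤ Real.exp 36 := Real.exp_le_exp.2 (by norm_num)
      nlinarith [Real.exp_pos 36]
  have hxi : (Real.exp (-36) / 4096)⁻¹ = Real.exp 36 * 4096 := by
    rw [Real.exp_neg, inv_div, div_inv_eq_mul, mul_comm]
  have hC1 : 1 ≤ Real.exp 36 * 4096 := by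
    have := Real.add_one_le_exp (36 : ℝ)
    linarith
  have hx30 : Real.exp (-36) / 4096 = (Real.exp (-6) / 4) * (Real.exp (-30) / 1024) := by
    have : Real.exp (-36) = Real.exp (-6) * Real.exp (-30) := by rw [← Real.exp_add]; norm_num
    rw [this]; ring
  have e30 : 0 < Real.exp (-30) := Real.exp_pos _
  have e6' : Real.exp (-6) ≤ 1 := by rw [← Real.exp_zero]; exact Real.exp_le_exp.2 (by norm_num)
  refine ⟨by linarith, ?_, ?_, ?_⟩
  · intro v r hr hdr
    rw [eNhd_ncard, hG, hxi]
    have hkn : (k : ℝ) ≤ n := by nlinarith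
    have hdn : d ^ r ≤ n := by
      refine hdr.trans ?_
      rw [Real.sqrt_le_left hn.le]
      nlinarith
    have h1 := h.touch_card_le ((nb E)^[r-1] {v})
    have h2 := h.nbi_card_le {v} (r-1)
    simp only [Finset.card_singleton, Nat.cast_one, one_mul] at h2
    have h3 := hpow r hdn
    rw [le_div_iff₀ hk]
    refine le_trans ?_ h3
    obtain ⟨m, rfl⟩ : ∃ m, r = m + 1 := ⟨r - 1, by omega⟩
    simp only [Nat.add_sub_cancel] at h1 h2 ⊢
    rw [pow_succ]
    have hDp := h.Dpos
    calc ((touch E ((nb E)^[m] {v})).card : ℝ) * k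
        ≤ (1 + 1 / l) * D * ((nb E)^[m] {v}).card * k := by gcongr
      _ = ((nb E)^[m] {v}).card * ((1 + 1 / l) * (D * k)) := by ring
      _ ≤ ((nb E)^[m] {v}).card * ((1 + 2 / l) * (D * k)) := by
        gcongr; norm_num
      _ ≤ _ := mul_le_mul_of_nonneg_right h2 hDelta.le
  · intro A r hr
    obtain ⟨A, rfl⟩ : ∃ A' : Finset (Fin n), A = (A' : Set (Fin n)) :=
      ⟨A.toFinset, by simp⟩
    rw [vNhd_ncard, Set.ncard_coe_finset, hG, hxi]
    rcases A.eq_empty_or_nonempty with rfl | hA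
    · simp [nbi_empty]
    have ha : (1 : ℝ) ≤ A.card := by exact_mod_cast hA.card_pos
    constructor
    · refine le_trans ?_ (h.lower hA r hd0.le hdup)
      apply mul_le_mul_of_nonneg_right _ (by positivity)
      rw [hx30]
      nlinarith
    · by_cases hdn : d ^ r ≤ n
      · refine (h.nbi_card_le A r).trans ?_
        have := mul_le_mul_of_nonneg_left (hpow r hdn) (by linarith : (0 : ℝ) ≤ A.card)
        linarith
      · push Not at hdn
        have h1 : (((nb E)^[r] A).card : ℝ) ≤ n := by
          have := Finset.card_le_univ ((nb E)^[r] A)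
          rw [Fintype.card_fin] at this
          exact_mod_cast this
        have h2 : (1 : ℝ) ≤ Real.exp 36 * 4096 * A.card := by nlinarith
        have : 0 < d ^ r := by positivity
        nlinarith
  · intro B hB r hr
    obtain ⟨B, rfl⟩ : ∃ B' : Finset (Finset (Fin n)), B = (B' : Set (Finset (Fin n))) :=
      ⟨B.toFinset, by simp⟩
    have hVB : VB (B : Set (Finset (Fin n))) = ((B.biUnion id : Finset (Fin n)) : Set (Fin n)) := by
      ext x; simp [VB]
    unfold vNhdE
    rw [hVB, vNhd_ncard, Set.ncard_coe_finset, hG]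
    rcases B.eq_empty_or_nonempty with rfl | hBne
    · simp
    have hBE : B ⊆ E := by rw [← hG]; exact_mod_cast hB
    have hc := h.edges_cover hBE hBne
    have hb : (1 : ℝ) ≤ B.card := by exact_mod_cast hBne.card_pos
    have hVne : (B.biUnion id).Nonempty := by
      apply Finset.card_pos.1
      have : (0 : ℝ) < min (k * B.card : ℝ) n := lt_min (by positivity) hn
      have : (0 : ℝ) < ((B.biUnion id).card : ℝ) := lt_of_lt_of_le (by positivity) hc
      exact_mod_cast this
    refine le_trans ?_ (h.lower hVne r hd0.le hdup)
    rw [hx30, mul_comm (Real.exp (-6) / 4), mul_assoc]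
    apply mul_le_mul_of_nonneg_left _ (by positivity)
    have hdr : 1 ≤ d ^ r := one_le_pow₀ (by linarith)
    apply le_min
    · refine le_trans ?_ (mul_le_mul_of_nonneg_right hc (by linarith))
      rw [← hddef, mul_assoc (Real.exp (-6) / 4) (min _ _) (d ^ r)]
      apply mul_le_mul_of_nonneg_left _ (by positivity)
      rw [min_mul_of_nonneg _ _ (by linarith)]
      apply min_le_min
      · linarith
      · nlinarith
    · have : min ((B.card : ℝ) * k * d ^ r) n ≤ n := min_le_right _ _
      have h0 : 0 ≤ min ((B.card : ℝ) * k * d ^ r) n := by positivity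
      nlinarith

end Good
end KGraph


namespace KGraph
open Classical

section prob
variable {α : Type*}

/-- the weight of an outcome in the binomial random subset of `Om` -/
noncomputable def wt (Om : Finset α) (p : ℝ) (E : Finset α) : ℝ :=
  p ^ E.card * (1 - p) ^ (Om.card - E.card)

/-- probability of an event -/
noncomputable def Pr (Om : Finset α) (p : ℝ) (X : Finset α → Prop) : ℝ :=
  ∑ E ∈ Om.powerset, if X E then wt Om p E else 0

variable {Om : Finset α} {p : ℝ}

lemma wt_nonneg (h0 : 0 ≤ p) (h1 : p ≤ 1) (E : Finset α) : 0 ≤ wt Om p E :=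
  mul_nonneg (pow_nonneg h0 _) (pow_nonneg (by linarith) _)

lemma sum_wt : ∑ E ∈ Om.powerset, wt Om p E = 1 := by
  unfold wt
  rw [Finset.sum_pow_mul_eq_add_pow]
  simp

lemma Pr_mono (h0 : 0 ≤ p) (h1 : p ≤ 1) {X Y : Finset α → Prop} (h : ∀ E ⊆ Om, X E → Y E) :
    Pr Om p X ≤ Pr Om p Y := by
  apply Finset.sum_le_sum
  intro E hE
  rw [Finset.mem_powerset] at hE
  by_cases hX : X E
  · simp [hX, h E hE hX]
  · simp only [hX, if_false]
    split_ifs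
    · exact wt_nonneg h0 h1 E
    · exact le_rfl

lemma Pr_exists {ι : Type*} (h0 : 0 ≤ p) (h1 : p ≤ 1) (I : Finset ι) (X : ι → Finset α → Prop) :
    Pr Om p (fun E => ∃ i ∈ I, X i E) ≤ ∑ i ∈ I, Pr Om p (X i) := by
  unfold Pr
  rw [Finset.sum_comm]
  apply Finset.sum_le_sum
  intro E _
  have hnn : ∀ i ∈ I, 0 ≤ (if X i E then wt Om p E else 0) := by
    intro i _
    split_ifs
    · exact wt_nonneg h0 h1 E
    · exact le_rfl
  split_ifs with h
  · obtain ⟨i, hi, hX⟩ := h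
    have := Finset.single_le_sum hnn hi
    simpa [hX] using this
  · exact Finset.sum_nonneg hnn

lemma Pr_or (h0 : 0 ≤ p) (h1 : p ≤ 1) (X Y : Finset α → Prop) :
    Pr Om p (fun E => X E ∨ Y E) ≤ Pr Om p X + Pr Om p Y := by
  unfold Pr
  rw [← Finset.sum_add_distrib]
  apply Finset.sum_le_sum
  intro E _
  have := wt_nonneg (Om := Om) h0 h1 E
  by_cases hX : X E <;> by_cases hY : Y E <;> simp [hX, hY, this]

lemma Pr_compl (X : Finset α → Prop) : Pr Om p X = 1 - Pr Om p (fun E => ¬ X E) := by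
  rw [eq_sub_iff_add_eq, ← sum_wt (Om := Om) (p := p)]
  unfold Pr
  rw [← Finset.sum_add_distrib]
  refine Finset.sum_congr rfl fun E _ => ?_
  by_cases hX : X E <;> simp [hX]

lemma Pr_nonneg (h0 : 0 ≤ p) (h1 : p ≤ 1) (X : Finset α → Prop) : 0 ≤ Pr Om p X := by
  apply Finset.sum_nonneg
  intro E _
  split_ifs
  · exact wt_nonneg h0 h1 E
  · exact le_rfl

lemma Pr_superset {F : Finset α} (hF : F ⊆ Om) : Pr Om p (fun E => F ⊆ E) = p ^ F.card := by
  have h := Finset.prod_add (fun _ => p) (fun e => if e ∈ F then (0 : ℝ) else 1 - p) Om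
  have hl : ∏ i ∈ Om, (p + if i ∈ F then (0 : ℝ) else 1 - p) = p ^ F.card := by
    have : ∀ i ∈ Om, (p + if i ∈ F then (0 : ℝ) else 1 - p) = if i ∈ F then p else 1 := by
      intro i _
      split_ifs <;> ring
    rw [Finset.prod_congr rfl this, Finset.prod_ite, Finset.prod_const, Finset.prod_const_one,
      mul_one]
    congr 2
    ext i; simp only [Finset.mem_filter]
    exact ⟨fun h => h.2, fun h => ⟨hF h, h⟩⟩
  rw [← hl, h]
  unfold Pr
  refine Finset.sum_congr rfl fun E hE => ?_
  rw [Finset.mem_powerset] at hE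
  rw [Finset.prod_const]
  by_cases hFE : F ⊆ E
  · rw [if_pos hFE]
    unfold wt
    congr 1
    rw [← Finset.card_sdiff_of_subset hE, ← Finset.prod_const]
    apply Finset.prod_congr rfl
    intro i hi
    rw [Finset.mem_sdiff] at hi
    rw [if_neg (fun h => hi.2 (hFE h))]
  · rw [if_neg hFE]
    obtain ⟨x, hx, hxE⟩ := Finset.not_subset.1 hFE
    rw [Finset.prod_eq_zero (i := x) (Finset.mem_sdiff.2 ⟨hF hx, hxE⟩) (by simp [hx]), mul_zero]

lemma mgf [DecidableEq α] {S : Finset α} (hS : S ⊆ Om) (x : ℝ) :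
    ∑ E ∈ Om.powerset, wt Om p E * x ^ (E ∩ S).card = (1 - p + p * x) ^ S.card := by
  have h := Finset.prod_add (fun e => p * if e ∈ S then x else 1) (fun _ => 1 - p) Om
  have hl : ∏ i ∈ Om, ((p * if i ∈ S then x else 1) + (1 - p)) = (1 - p + p * x) ^ S.card := by
    have : ∀ i ∈ Om, ((p * if i ∈ S then x else 1) + (1 - p)) =
        if i ∈ S then (1 - p + p * x) else 1 := by
      intro i _
      split_ifs <;> ring
    rw [Finset.prod_congr rfl this, Finset.prod_ite, Finset.prod_const, Finset.prod_const_one,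
      mul_one]
    congr 2
    ext i; simp only [Finset.mem_filter]
    exact ⟨fun h => h.2, fun h => ⟨hS h, h⟩⟩
  rw [← hl, h]
  refine Finset.sum_congr rfl fun E hE => ?_
  rw [Finset.mem_powerset] at hE
  rw [Finset.prod_const, Finset.prod_mul_distrib, Finset.prod_const, Finset.prod_ite,
    Finset.prod_const, Finset.prod_const_one, mul_one, Finset.card_sdiff_of_subset hE,
    Finset.filter_mem_eq_inter]
  unfold wt
  ring

lemma chernoff [DecidableEq α] (h0 : 0 ≤ p) (h1 : p ≤ 1) {S : Finset α} (hS : S ⊆ Om) {t x : ℝ} (ht : |t| ≤ 1)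
    {X : Finset α → Prop} (hX : ∀ E ⊆ Om, X E → t * x ≤ t * ((E ∩ S).card : ℝ)) :
    Pr Om p X ≤ Real.exp (-(t * x) + p * S.card * (t + t ^ 2)) := by
  have hle : Pr Om p X ≤ Real.exp (-(t * x)) *
      ∑ E ∈ Om.powerset, wt Om p E * Real.exp t ^ (E ∩ S).card := by
    unfold Pr
    rw [Finset.mul_sum]
    apply Finset.sum_le_sum
    intro E hE
    rw [Finset.mem_powerset] at hE
    have hw := wt_nonneg (Om := Om) h0 h1 E
    split_ifs with hXE
    · have := hX E hE hXE
      rw [← Real.exp_nat_mul]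
      have h2 : 1 ≤ Real.exp (-(t * x)) * Real.exp ((E ∩ S).card * t) := by
        rw [← Real.exp_add, ← Real.exp_zero]
        apply Real.exp_le_exp.2
        linarith
      nlinarith
    · positivity
  refine hle.trans ?_
  rw [mgf hS, Real.exp_add]
  apply mul_le_mul_of_nonneg_left _ (Real.exp_pos _).le
  have h2 : Real.exp t ≤ 1 + t + t ^ 2 := by
    have := (abs_le.1 (Real.abs_exp_sub_one_sub_id_le ht)).2
    linarith
  have h3 : 1 - p + p * Real.exp t ≤ Real.exp (p * (t + t ^ 2)) := by
    have := Real.add_one_le_exp (p * (t + t ^ 2))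
    nlinarith
  have h4 : 0 ≤ 1 - p + p * Real.exp t := by
    have := Real.exp_pos t
    nlinarith [mul_nonneg h0 this.le]
  refine (pow_le_pow_left₀ h4 h3 _).trans ?_
  rw [← Real.exp_nat_mul]
  apply le_of_eq
  congr 1; ring

end prob

lemma ghProb_eq (n k : ℕ) (p : ℝ) (Q : KGraph n k → Prop) :
    ghProb n k p Q = Pr (Finset.powersetCard k (Finset.univ : Finset (Fin n))) p
      (fun E => ∃ h : ∀ e ∈ E, e.card = k, Q ⟨E, h⟩) := by
  unfold ghProb Pr
  refine Finset.sum_congr rfl fun E hE => ?_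
  by_cases h : ∀ e ∈ E, e.card = k
  · rw [dif_pos h]
    by_cases hQ : Q ⟨E, h⟩
    · rw [if_pos hQ, if_pos ⟨h, hQ⟩]; rfl
    · rw [if_neg hQ, if_neg]
      rintro ⟨_, h'⟩; exact hQ h'
  · rw [dif_neg h, if_neg]
    rintro ⟨h', _⟩; exact h h'

/-! counting -/

variable {n k : ℕ}

lemma card_star (hk : 1 ≤ k) (v : Fin n) :
    ((Finset.powersetCard k (Finset.univ : Finset (Fin n))).filter (fun e => v ∈ e)).card =
      (n - 1).choose (k - 1) := by
  have := Finset.card_filter_powersetCard_subset {v} (Finset.univ : Finset (Fin n)) k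
    (Finset.subset_univ _) (by simpa using hk)
  simp only [Finset.singleton_subset_iff, Finset.card_singleton, Finset.card_univ,
    Fintype.card_fin] at this
  exact this

lemma card_pair (hk : 2 ≤ k) {u v : Fin n} (huv : u ≠ v) :
    ((Finset.powersetCard k (Finset.univ : Finset (Fin n))).filter
      (fun e => v ∈ e ∧ u ∈ e)).card = (n - 2).choose (k - 2) := by
  have h2 : ({v, u} : Finset (Fin n)).card = 2 := Finset.card_pair huv.symm
  have := Finset.card_filter_powersetCard_subset {v, u} (Finset.univ : Finset (Fin n)) k
    (Finset.subset_univ _) (by rw [h2]; exact hk)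
  rw [h2, Finset.card_univ, Fintype.card_fin] at this
  rw [← this]
  congr 1
  apply Finset.filter_congr
  intro e _
  simp [Finset.insert_subset_iff]

lemma card_touch_lower (hk : 2 ≤ k) (A : Finset (Fin n)) :
    (A.card : ℝ) * (((n - 1).choose (k - 1) : ℝ) - A.card * ((n - 2).choose (k - 2) : ℝ)) ≤
      ((touch (Finset.powersetCard k (Finset.univ : Finset (Fin n))) A).card : ℝ) := by
  set Om := Finset.powersetCard k (Finset.univ : Finset (Fin n)) with hOm
  let ex : Fin n → Finset (Finset (Fin n)) := fun v => Om.filter (fun e => e ∩ A = {v})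
  have hsub : A.biUnion ex ⊆ touch Om A := by
    intro e he
    simp only [Finset.mem_biUnion, ex, Finset.mem_filter] at he
    obtain ⟨v, hv, heO, hev⟩ := he
    simp only [touch, Finset.mem_filter]
    exact ⟨heO, by rw [hev]; exact Finset.singleton_nonempty v⟩
  have hdisj : (A : Set (Fin n)).PairwiseDisjoint ex := by
    intro u _ v _ huv
    rw [Function.onFun, Finset.disjoint_left]
    intro e he he'
    simp only [ex, Finset.mem_filter] at he he'
    exact huv (Finset.singleton_injective (he.2.symm.trans he'.2))
  have hcard : ((A.biUnion ex).card : ℝ) = ∑ v ∈ A, ((ex v).card : ℝ) := by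
    rw [Finset.card_biUnion hdisj]; push_cast; rfl
  have hle : ((A.biUnion ex).card : ℝ) ≤ (touch Om A).card := by
    exact_mod_cast Finset.card_le_card hsub
  refine le_trans ?_ hle
  rw [hcard, ← nsmul_eq_mul, ← Finset.sum_const]
  apply Finset.sum_le_sum
  intro v hv
  have hcov : Om.filter (fun e => v ∈ e) ⊆
      ex v ∪ (A.erase v).biUnion (fun u => Om.filter (fun e => v ∈ e ∧ u ∈ e)) := by
    intro e he
    rw [Finset.mem_filter] at he
    simp only [Finset.mem_union, Finset.mem_biUnion, Finset.mem_filter, Finset.mem_erase, ex]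
    by_cases hu : ∃ u ∈ e, u ∈ A ∧ u ≠ v
    · obtain ⟨u, h1, h2, h3⟩ := hu
      exact Or.inr ⟨u, ⟨h3, h2⟩, he.1, he.2, h1⟩
    · left
      refine ⟨he.1, ?_⟩
      push Not at hu
      ext x
      simp only [Finset.mem_inter, Finset.mem_singleton]
      constructor
      · rintro ⟨h1, h2⟩; exact hu x h1 h2
      · rintro rfl; exact ⟨he.2, hv⟩
  have h1 := Finset.card_le_card hcov
  rw [card_star (by omega)] at h1
  have h2 : ((A.erase v).biUnion (fun u => Om.filter (fun e => v ∈ e ∧ u ∈ e))).card ≤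
      (A.erase v).card * (n - 2).choose (k - 2) := by
    apply Finset.card_biUnion_le_card_mul
    intro u hu
    rw [Finset.mem_erase] at hu
    exact (card_pair hk hu.1).le
  have h3 : (A.erase v).card ≤ A.card := Finset.card_le_card (Finset.erase_subset _ _)
  have h4 : (n - 1).choose (k - 1) ≤ (ex v).card + A.card * (n - 2).choose (k - 2) := by
    refine h1.trans ((Finset.card_union_le _ _).trans (Nat.add_le_add_left (h2.trans ?_) _))
    exact Nat.mul_le_mul_right _ h3
  have h5 : ((n - 1).choose (k - 1) : ℝ) ≤ (ex v).card + A.card * ((n - 2).choose (k - 2) : ℝ) := by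
    exact_mod_cast h4
  linarith

lemma desc_ratio {s n : ℕ} (h : s ≤ n) (k : ℕ) :
    s.descFactorial k * n ^ k ≤ s ^ k * n.descFactorial k := by
  induction k with
  | zero => simp
  | succ k ih =>
    rw [Nat.descFactorial_succ, Nat.descFactorial_succ, pow_succ, pow_succ]
    have h1 : (s - k) * n ≤ s * (n - k) := by
      rw [Nat.sub_mul, Nat.mul_sub]
      have : s * k ≤ k * n := by rw [mul_comm]; exact Nat.mul_le_mul_left k h
      omega
    calc (s - k) * s.descFactorial k * (n ^ k * n) =
        ((s - k) * n) * (s.descFactorial k * n ^ k) := by ring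
      _ ≤ (s * (n - k)) * (s ^ k * n.descFactorial k) := Nat.mul_le_mul h1 ih
      _ = _ := by ring

lemma choose_ratio {s n : ℕ} (h : s ≤ n) (hn : 0 < n) (k : ℕ) :
    (s.choose k : ℝ) ≤ ((s : ℝ) / n) ^ k * (n.choose k : ℝ) := by
  have h1 := desc_ratio h k
  rw [Nat.descFactorial_eq_factorial_mul_choose, Nat.descFactorial_eq_factorial_mul_choose] at h1
  have h2 : s.choose k * n ^ k ≤ s ^ k * n.choose k := by
    apply Nat.le_of_mul_le_mul_left _ (Nat.factorial_pos k)
    calc k.factorial * (s.choose k * n ^ k) = k.factorial * s.choose k * n ^ k := by ring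
      _ ≤ _ := h1
      _ = _ := by ring
  have h3 : (s.choose k : ℝ) * (n : ℝ) ^ k ≤ (s : ℝ) ^ k * (n.choose k : ℝ) := by exact_mod_cast h2
  have hn' : (0 : ℝ) < n := by exact_mod_cast hn
  rw [div_pow, div_mul_eq_mul_div, le_div_iff₀ (pow_pos hn' k)]
  exact h3

lemma choose_exp (n s : ℕ) (hs : 1 ≤ s) :
    (n.choose s : ℝ) ≤ Real.exp s * ((n : ℝ) / s) ^ s := by
  have h1 := Nat.choose_le_pow_div (α := ℝ) s n
  have h2 := Real.pow_div_factorial_le_exp (x := (s : ℝ)) (by positivity) s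
  have hs' : (0 : ℝ) < s := by exact_mod_cast hs
  refine h1.trans ?_
  calc (n : ℝ) ^ s / (s.factorial : ℝ) = ((s : ℝ) ^ s / s.factorial) * ((n : ℝ) / s) ^ s := by
        rw [div_pow]; field_simp
    _ ≤ _ := mul_le_mul_of_nonneg_right h2 (by positivity)

lemma choose_ge (m j : ℕ) (hj : 1 ≤ j) (hjm : j + 1 ≤ m) : m ≤ m.choose j := by
  induction m generalizing j with
  | zero => omega
  | succ m ih =>
    obtain ⟨i, rfl⟩ : ∃ i, j = i + 1 := ⟨j - 1, by omega⟩
    rw [Nat.choose_succ_succ']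
    by_cases h : i + 1 + 1 ≤ m
    · have := ih (i+1) (by omega) h
      have h2 : 0 < m.choose i := Nat.choose_pos (by omega)
      omega
    · have hm : m = i + 1 := by omega
      subst hm
      simp

end KGraph


namespace KGraph
open Classical

/-- numeric hypotheses on the parameters -/
structure Par (n k : ℕ) (p D l : ℝ) : Prop where
  hl : l = Real.log n
  hl100 : 100 ≤ l
  hk : 10 * l ≤ k
  hp0 : 0 ≤ p
  hp1 : p ≤ 1
  hDdef : D = p * ((n - 1).choose (k - 1) : ℕ)
  hD : 16 * l ^ 3 ≤ D
  hM : D * k ≤ n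

namespace Par
variable {n k : ℕ} {p D l : ℝ}

lemma lpos (h : Par n k p D l) : 0 < l := by linarith [h.hl100]
lemma kreal (h : Par n k p D l) : (1000 : ℝ) ≤ k := by linarith [h.hl100, h.hk]
lemma knat (h : Par n k p D l) : 1000 ≤ k := by exact_mod_cast h.kreal
lemma Dpos (h : Par n k p D l) : 0 < D := by
  have := h.lpos
  have := h.hD
  have : 0 < 16 * l ^ 3 := by positivity
  linarith
lemma npos (h : Par n k p D l) : (0 : ℝ) < n :=
  lt_of_lt_of_le (mul_pos h.Dpos (by linarith [h.kreal])) h.hM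
lemma nexp (h : Par n k p D l) : (n : ℝ) = Real.exp l := by
  rw [h.hl, Real.exp_log h.npos]
lemma lD (h : Par n k p D l) : l ≤ D := by
  have := h.hD
  have h1 := h.hl100
  nlinarith [sq_nonneg l, mul_pos h.lpos h.lpos]
lemma ninv (h : Par n k p D l) : 1 / (n : ℝ) = Real.exp (-l) := by
  rw [h.nexp, Real.exp_neg, one_div]
lemma il (h : Par n k p D l) : 1 / l ≤ 1 / 100 := by
  apply one_div_le_one_div_of_le (by norm_num) h.hl100

lemma B1 (h : Par n k p D l) :
    Pr (Finset.powersetCard k (Finset.univ : Finset (Fin n))) p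
      (fun E => ∃ v ∈ (Finset.univ : Finset (Fin n)),
        (1 + 1 / l) * D < ((E.filter (fun e => v ∈ e)).card : ℝ)) ≤ 1 / n := by
  refine (Pr_exists h.hp0 h.hp1 _ _).trans ?_
  have hl := h.lpos
  have hil := h.il
  have hbound : ∀ v ∈ (Finset.univ : Finset (Fin n)),
      Pr (Finset.powersetCard k (Finset.univ : Finset (Fin n))) p
        (fun E => (1 + 1 / l) * D < ((E.filter (fun e => v ∈ e)).card : ℝ)) ≤
        Real.exp (-(2 * l)) := by
    intro v _
    have hc := chernoff h.hp0 h.hp1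
      (S := (Finset.powersetCard k (Finset.univ : Finset (Fin n))).filter (fun e => v ∈ e))
      (Finset.filter_subset _ _) (t := 1 / l / 2) (x := (1 + 1 / l) * D)
      (X := fun E => (1 + 1 / l) * D < ((E.filter (fun e => v ∈ e)).card : ℝ))
      (by rw [abs_of_nonneg (by positivity)]; linarith) (by
        intro E hE hX
        have : E ∩ (Finset.powersetCard k (Finset.univ : Finset (Fin n))).filter (fun e => v ∈ e)
            = E.filter (fun e => v ∈ e) := by
          ext e
          simp only [Finset.mem_inter, Finset.mem_filter]
          exact ⟨fun h => ⟨h.1, h.2.2⟩, fun h => ⟨h.1, hE h.1, h.2⟩⟩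
        rw [this]
        exact mul_le_mul_of_nonneg_left hX.le (by positivity))
    refine hc.trans (Real.exp_le_exp.2 ?_)
    rw [card_star (by have := h.knat; omega), ← h.hDdef]
    have e1 : -(1 / l / 2 * ((1 + 1 / l) * D)) + D * (1 / l / 2 + (1 / l / 2) ^ 2) =
      - (D / (4 * l ^ 2)) := by field_simp; ring
    rw [e1, neg_le_neg_iff, le_div_iff₀ (by positivity)]
    have := h.hD
    nlinarith [pow_pos hl 3]
  refine (Finset.sum_le_sum hbound).trans ?_
  rw [Finset.sum_const, Finset.card_univ, Fintype.card_fin, nsmul_eq_mul, h.ninv, h.nexp,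
    ← Real.exp_add]
  apply Real.exp_le_exp.2
  linarith

lemma touch_mean (h : Par n k p D l) {A : Finset (Fin n)} (hb : (A.card : ℝ) * (D * k) ≤ n) :
    (1 - 1 / l) * (A.card * D) ≤
      p * ((touch (Finset.powersetCard k (Finset.univ : Finset (Fin n))) A).card : ℝ) := by
  have hkn := h.knat
  have h1 := card_touch_lower (by omega : 2 ≤ k) A
  have h2 := mul_le_mul_of_nonneg_left h1 h.hp0
  refine le_trans ?_ h2
  have hl := h.lpos
  have hD := h.Dpos
  have hnp := h.npos
  have hkr := h.kreal
  have hkn' : (k : ℝ) ≤ n := by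
    have h1 := h.lD
    have h2 := h.hl100
    have h3 := h.hM
    nlinarith
  -- (n-1) C(n-2,k-2) = C(n-1,k-1)(k-1)
  have hnn : 2 ≤ n := by
    have : k ≤ n := by exact_mod_cast hkn'
    omega
  have hid := Nat.add_one_mul_choose_eq (n - 2) (k - 2)
  have e1 : n - 2 + 1 = n - 1 := by omega
  have e2 : k - 2 + 1 = k - 1 := by omega
  rw [e1, e2] at hid
  have hid' : ((n : ℝ) - 1) * ((n - 2).choose (k - 2) : ℝ) =
      ((n - 1).choose (k - 1) : ℝ) * ((k : ℝ) - 1) := by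
    have : (((n - 1) * (n - 2).choose (k - 2) : ℕ) : ℝ) = (((n - 1).choose (k - 1) * (k - 1) : ℕ) : ℝ) := by
      rw [hid]
    push_cast [Nat.cast_sub (by omega : 1 ≤ n), Nat.cast_sub (by omega : 1 ≤ k)] at this
    exact this
  set c1 : ℝ := ((n - 1).choose (k - 1) : ℝ) with hc1
  set c2 : ℝ := ((n - 2).choose (k - 2) : ℝ) with hc2
  have hc1n : 0 ≤ c1 := Nat.cast_nonneg _
  have hc2n : 0 ≤ c2 := Nat.cast_nonneg _
  have hDd : D = p * c1 := h.hDdef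
  have hc12 : c2 ≤ c1 := by
    have hn2 : (2 : ℝ) ≤ n := by exact_mod_cast hnn
    by_contra hcon
    push Not at hcon
    have : ((n : ℝ) - 1) * c1 < ((n : ℝ) - 1) * c2 := mul_lt_mul_of_pos_left hcon (by linarith)
    nlinarith
  have hn12 : (n : ℝ) * c2 ≤ c1 * k := by nlinarith
  have ha : (0 : ℝ) ≤ A.card := Nat.cast_nonneg _
  -- a * c2 * p ≤ 1 ≤ D / l
  have h3 : A.card * (p * c2) ≤ 1 := by
    have h5 : p * (n * c2) ≤ p * (c1 * k) := mul_le_mul_of_nonneg_left hn12 h.hp0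
    have h6 : A.card * (p * (n * c2)) ≤ A.card * (p * (c1 * k)) := mul_le_mul_of_nonneg_left h5 ha
    have h7 : A.card * (p * (c1 * k)) = A.card * (D * k) := by rw [hDd]; ring
    have h8 : (n : ℝ) * (A.card * (p * c2)) ≤ n * 1 := by linarith
    exact le_of_mul_le_mul_left h8 hnp
  have h4 : 1 ≤ 1 / l * D := by
    rw [div_mul_eq_mul_div, one_mul, le_div_iff₀ hl]
    linarith [h.lD]
  have h5 : p * (A.card * (c1 - A.card * c2)) = A.card * D - A.card * (A.card * (p * c2)) := by
    rw [hDd]; ring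
  rw [h5]
  have h6 : (A.card : ℝ) * (A.card * (p * c2)) ≤ A.card * (1 / l * D) :=
    mul_le_mul_of_nonneg_left (h3.trans h4) ha
  linarith

lemma B2 (h : Par n k p D l) :
    Pr (Finset.powersetCard k (Finset.univ : Finset (Fin n))) p
      (fun E => ∃ A ∈ (Finset.univ : Finset (Finset (Fin n))).erase ∅,
        (A.card : ℝ) * (D * k) ≤ n ∧ ((touch E A).card : ℝ) < (1 - 2 / l) * (A.card * D)) ≤ 2 / n := by
  refine (Pr_exists h.hp0 h.hp1 _ _).trans ?_
  have hl := h.lpos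
  have hil := h.il
  have hDp := h.Dpos
  set Om := Finset.powersetCard k (Finset.univ : Finset (Fin n)) with hOm
  have hbound : ∀ A ∈ (Finset.univ : Finset (Finset (Fin n))).erase ∅,
      Pr Om p (fun E => (A.card : ℝ) * (D * k) ≤ n ∧
        ((touch E A).card : ℝ) < (1 - 2 / l) * (A.card * D)) ≤ Real.exp (-(2 * l)) ^ A.card := by
    intro A _
    by_cases hA : (A.card : ℝ) * (D * k) ≤ n
    · have hmean := h.touch_mean hA
      set mu := p * ((touch Om A).card : ℝ) with hmu
      have ha : (0 : ℝ) ≤ A.card := Nat.cast_nonneg _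
      have haD : 0 ≤ A.card * D := by positivity
      have hx : (1 - 2 / l) * (A.card * D) ≤ (1 - 1 / l) * mu := by
        have h1 : 0 ≤ 1 - 1 / l := by linarith
        refine le_trans ?_ (mul_le_mul_of_nonneg_left hmean h1)
        rw [← mul_assoc (1 - 1 / l) (1 - 1 / l) _]
        apply mul_le_mul_of_nonneg_right _ haD
        have : 2 / l = 2 * (1 / l) := by ring
        rw [this]; nlinarith [sq_nonneg (1 / l)]
      have hc := chernoff h.hp0 h.hp1 (Om := Om) (S := touch Om A)
        (Finset.filter_subset _ _) (t := -(1 / l / 2)) (x := (1 - 1 / l) * mu)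
        (X := fun E => (A.card : ℝ) * (D * k) ≤ n ∧
          ((touch E A).card : ℝ) < (1 - 2 / l) * (A.card * D))
        (by rw [abs_neg, abs_of_nonneg (by positivity)]; linarith) (by
          rintro E hE ⟨_, hX⟩
          have : E ∩ touch Om A = touch E A := by
            ext e
            simp only [touch, Finset.mem_inter, Finset.mem_filter]
            exact ⟨fun h => ⟨h.1, h.2.2⟩, fun h => ⟨h.1, hE h.1, h.2⟩⟩
          rw [this]
          have h2 : ((touch E A).card : ℝ) ≤ (1 - 1 / l) * mu := hX.le.trans hx
          have := mul_le_mul_of_nonneg_left h2 (by positivity : 0 ≤ 1 / l / 2)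
          linarith)
      refine hc.trans ?_
      rw [← Real.exp_nat_mul]
      apply Real.exp_le_exp.2
      rw [← hmu]
      have e1 : -(-(1 / l / 2) * ((1 - 1 / l) * mu)) + mu * (-(1 / l / 2) + (-(1 / l / 2)) ^ 2) =
        - (mu / (4 * l ^ 2)) := by field_simp; ring
      rw [e1]
      have h3 : A.card * (2 * l) ≤ mu / (4 * l ^ 2) := by
        rw [le_div_iff₀ (by positivity)]
        have h4 : 1 / 2 * (A.card * D) ≤ mu :=
          (mul_le_mul_of_nonneg_right (by linarith) haD).trans hmean
        have h5 := mul_le_mul_of_nonneg_left h.hD ha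
        nlinarith
      linarith
    · have : Pr Om p (fun E => (A.card : ℝ) * (D * k) ≤ n ∧
        ((touch E A).card : ℝ) < (1 - 2 / l) * (A.card * D)) = 0 := by
        unfold Pr
        apply Finset.sum_eq_zero
        intro E _
        rw [if_neg]
        exact fun h' => hA h'.1
      rw [this]; positivity
  refine (Finset.sum_le_sum hbound).trans ?_
  have hsum := Finset.sum_pow_mul_eq_add_pow (Real.exp (-(2 * l))) 1 (Finset.univ : Finset (Fin n))
  simp only [one_pow, mul_one, Finset.powerset_univ, Finset.card_univ, Fintype.card_fin] at hsum
  have hs2 := Finset.add_sum_erase (Finset.univ : Finset (Finset (Fin n)))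
    (fun A => Real.exp (-(2 * l)) ^ A.card) (Finset.mem_univ ∅)
  simp only [Finset.card_empty, pow_zero] at hs2
  rw [hsum] at hs2
  have hpow : (Real.exp (-(2 * l)) + 1) ^ n ≤ Real.exp (1 / n) := by
    refine (pow_le_pow_left₀ (by positivity) (Real.add_one_le_exp _) n).trans ?_
    rw [← Real.exp_nat_mul]
    apply Real.exp_le_exp.2
    rw [h.ninv, h.nexp, ← Real.exp_add]
    apply Real.exp_le_exp.2
    linarith
  have hn1 : 1 / (n : ℝ) ≤ 1 := by
    rw [h.ninv, ← Real.exp_zero]; exact Real.exp_le_exp.2 (by linarith)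
  have hn0 : 0 ≤ 1 / (n : ℝ) := by positivity
  have hq := (abs_le.1 (Real.abs_exp_sub_one_sub_id_le
    (x := 1 / (n : ℝ)) (by rw [abs_of_nonneg hn0]; exact hn1))).2
  have : 2 / (n : ℝ) = 2 * (1 / n) := by ring
  rw [this]
  nlinarith

/-- the arithmetic condition for a bad overlap -/
def cond (n k b s : ℕ) : Prop :=
  s ≤ k * b ∧ ((s : ℝ) / n) ^ (k * b - s) ≤ Real.exp (-(2 * (k * b : ℝ)))

lemma B3_pair (h : Par n k p D l) {b s : ℕ} (hb : 1 ≤ b) (hs : 1 ≤ s) (hsn : s ≤ n)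
    (hc : cond n k b s) :
    Pr (Finset.powersetCard k (Finset.univ : Finset (Fin n))) p
      (fun E => ∃ U ∈ Finset.powersetCard s (Finset.univ : Finset (Fin n)),
        ∃ F ∈ Finset.powersetCard b (Finset.powersetCard k U), F ⊆ E) ≤ Real.exp (-(3 * l)) := by
  have hn := h.npos
  have hnn : 0 < n := by exact_mod_cast hn
  have hkn := h.knat
  have hkr := h.kreal
  have hl := h.lpos
  have hs' : (0 : ℝ) < s := by exact_mod_cast hs
  have h1 : Pr (Finset.powersetCard k (Finset.univ : Finset (Fin n))) p
      (fun E => ∃ U ∈ Finset.powersetCard s (Finset.univ : Finset (Fin n)),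
        ∃ F ∈ Finset.powersetCard b (Finset.powersetCard k U), F ⊆ E) ≤
        (n.choose s : ℝ) * (((s.choose k).choose b : ℝ) * p ^ b) := by
    refine (Pr_exists h.hp0 h.hp1 _ _).trans ?_
    have : ∀ U ∈ Finset.powersetCard s (Finset.univ : Finset (Fin n)),
        Pr (Finset.powersetCard k (Finset.univ : Finset (Fin n))) p
          (fun E => ∃ F ∈ Finset.powersetCard b (Finset.powersetCard k U), F ⊆ E) ≤
          ((s.choose k).choose b : ℝ) * p ^ b := by
      intro U hU
      rw [Finset.mem_powersetCard] at hU
      refine (Pr_exists h.hp0 h.hp1 _ _).trans ?_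
      have h2 : ∀ F ∈ Finset.powersetCard b (Finset.powersetCard k U),
          Pr (Finset.powersetCard k (Finset.univ : Finset (Fin n))) p (fun E => F ⊆ E) ≤ p ^ b := by
        intro F hF
        rw [Finset.mem_powersetCard] at hF
        rw [Pr_superset, hF.2]
        exact hF.1.trans (Finset.powersetCard_mono (Finset.subset_univ U))
      refine (Finset.sum_le_sum h2).trans ?_
      rw [Finset.sum_const, Finset.card_powersetCard, Finset.card_powersetCard, hU.2, nsmul_eq_mul]
    refine (Finset.sum_le_sum this).trans ?_
    rw [Finset.sum_const, Finset.card_powersetCard, Finset.card_univ, Fintype.card_fin, nsmul_eq_mul]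
  refine h1.trans ?_
  -- p * C(n,k) ≤ n^2
  have hpC : p * (n.choose k : ℝ) ≤ (n : ℝ) ^ 2 := by
    have hid := Nat.add_one_mul_choose_eq (n - 1) (k - 1)
    have e1 : n - 1 + 1 = n := by omega
    have e2 : k - 1 + 1 = k := by omega
    rw [e1, e2] at hid
    have hid' : (n : ℝ) * ((n - 1).choose (k - 1) : ℝ) = (n.choose k : ℝ) * k := by exact_mod_cast hid
    have h2 : p * (n.choose k : ℝ) * k = n * D := by
      rw [h.hDdef]
      calc p * (n.choose k : ℝ) * k = p * ((n.choose k : ℝ) * k) := by ring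
        _ = _ := by rw [← hid']; ring
    have h3 : D ≤ n := by nlinarith [h.hM, h.Dpos]
    have h4 : 0 ≤ p * (n.choose k : ℝ) := mul_nonneg h.hp0 (Nat.cast_nonneg _)
    nlinarith
  have h2 : ((s.choose k).choose b : ℝ) * p ^ b ≤ ((s : ℝ) / n) ^ (k * b) * ((n : ℝ) ^ 2) ^ b := by
    have h3 : ((s.choose k).choose b : ℝ) ≤ (s.choose k : ℝ) ^ b := by
      exact_mod_cast Nat.choose_le_pow (s.choose k) b
    have h4 : (s.choose k : ℝ) * p ≤ ((s : ℝ) / n) ^ k * (n : ℝ) ^ 2 := by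
      have h5 := mul_le_mul_of_nonneg_right (choose_ratio hsn hnn k) h.hp0
      refine h5.trans ?_
      rw [mul_assoc]
      apply mul_le_mul_of_nonneg_left _ (by positivity)
      linarith
    calc ((s.choose k).choose b : ℝ) * p ^ b ≤ (s.choose k : ℝ) ^ b * p ^ b :=
          mul_le_mul_of_nonneg_right h3 (pow_nonneg h.hp0 b)
      _ = ((s.choose k : ℝ) * p) ^ b := by rw [mul_pow]
      _ ≤ (((s : ℝ) / n) ^ k * (n : ℝ) ^ 2) ^ b :=
          pow_le_pow_left₀ (mul_nonneg (Nat.cast_nonneg _) h.hp0) h4 b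
      _ = _ := by rw [mul_pow, ← pow_mul]
  have h3 := choose_exp n s hs
  calc (n.choose s : ℝ) * (((s.choose k).choose b : ℝ) * p ^ b)
      ≤ (Real.exp s * ((n : ℝ) / s) ^ s) * (((s : ℝ) / n) ^ (k * b) * ((n : ℝ) ^ 2) ^ b) := by
        apply mul_le_mul h3 h2 (mul_nonneg (Nat.cast_nonneg _) (pow_nonneg h.hp0 b)) (by positivity)
    _ = Real.exp s * (((n : ℝ) / s) ^ s * ((s : ℝ) / n) ^ s) * ((s : ℝ) / n) ^ (k * b - s) *
        ((n : ℝ) ^ 2) ^ b := by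
        have : ((s : ℝ) / n) ^ (k * b) = ((s : ℝ) / n) ^ s * ((s : ℝ) / n) ^ (k * b - s) := by
          rw [← pow_add]; congr 1; have := hc.1; omega
        rw [this]; ring
    _ = Real.exp s * ((s : ℝ) / n) ^ (k * b - s) * ((n : ℝ) ^ 2) ^ b := by
        rw [← mul_pow]
        have : (n : ℝ) / s * (s / n) = 1 := by field_simp
        rw [this, one_pow, mul_one]
    _ ≤ Real.exp s * Real.exp (-(2 * (k * b : ℝ))) * Real.exp (b * (2 * l)) := by
        have e1 : ((n : ℝ) ^ 2) ^ b = Real.exp (b * (2 * l)) := by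
          rw [h.nexp, ← Real.exp_nat_mul, ← Real.exp_nat_mul]
          norm_num
        rw [e1]
        have := hc.2
        gcongr
    _ = Real.exp (s + -(2 * (k * b : ℝ)) + b * (2 * l)) := by rw [Real.exp_add, Real.exp_add]
    _ ≤ Real.exp (-(3 * l)) := by
        apply Real.exp_le_exp.2
        have h5 : (s : ℝ) ≤ k * b := by exact_mod_cast hc.1
        have h6 : (1 : ℝ) ≤ b := by exact_mod_cast hb
        have h7 := h.hk
        nlinarith

lemma B3 (h : Par n k p D l) :
    Pr (Finset.powersetCard k (Finset.univ : Finset (Fin n))) p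
      (fun E => ∃ b ∈ Finset.Icc 1 n, ∃ s ∈ Finset.Icc 1 n, cond n k b s ∧
        ∃ U ∈ Finset.powersetCard s (Finset.univ : Finset (Fin n)),
        ∃ F ∈ Finset.powersetCard b (Finset.powersetCard k U), F ⊆ E) ≤ 1 / n := by
  refine (Pr_exists h.hp0 h.hp1 _ _).trans ?_
  have : ∀ b ∈ Finset.Icc 1 n, Pr (Finset.powersetCard k (Finset.univ : Finset (Fin n))) p
      (fun E => ∃ s ∈ Finset.Icc 1 n, cond n k b s ∧
        ∃ U ∈ Finset.powersetCard s (Finset.univ : Finset (Fin n)),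
        ∃ F ∈ Finset.powersetCard b (Finset.powersetCard k U), F ⊆ E) ≤ n * Real.exp (-(3 * l)) := by
    intro b hb
    refine (Pr_exists h.hp0 h.hp1 _ _).trans ?_
    have h2 : ∀ s ∈ Finset.Icc 1 n, Pr (Finset.powersetCard k (Finset.univ : Finset (Fin n))) p
      (fun E => cond n k b s ∧
        ∃ U ∈ Finset.powersetCard s (Finset.univ : Finset (Fin n)),
        ∃ F ∈ Finset.powersetCard b (Finset.powersetCard k U), F ⊆ E) ≤ Real.exp (-(3 * l)) := by
      intro s hs
      rw [Finset.mem_Icc] at hb hs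
      by_cases hc : cond n k b s
      · exact (Pr_mono h.hp0 h.hp1 fun E _ hE => hE.2).trans (h.B3_pair hb.1 hs.1 hs.2 hc)
      · have : Pr (Finset.powersetCard k (Finset.univ : Finset (Fin n))) p
          (fun E => cond n k b s ∧
          ∃ U ∈ Finset.powersetCard s (Finset.univ : Finset (Fin n)),
          ∃ F ∈ Finset.powersetCard b (Finset.powersetCard k U), F ⊆ E) = 0 := by
          unfold Pr
          apply Finset.sum_eq_zero
          intro E _
          rw [if_neg]
          exact fun h' => hc h'.1
        rw [this]; positivity
    refine (Finset.sum_le_sum h2).trans ?_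
    rw [Finset.sum_const, Nat.card_Icc, nsmul_eq_mul]
    simp
  refine (Finset.sum_le_sum this).trans ?_
  rw [Finset.sum_const, Nat.card_Icc, nsmul_eq_mul, h.ninv, Nat.add_sub_cancel, h.nexp,
    ← Real.exp_add, ← Real.exp_add]
  apply Real.exp_le_exp.2
  linarith

lemma not_good (h : Par n k p D l) :
    Pr (Finset.powersetCard k (Finset.univ : Finset (Fin n))) p
      (fun E => ¬ Good n k D l E) ≤ 4 / n := by
  have hl := h.lpos
  have hn := h.npos
  have hkr := h.kreal
  have hstep := Pr_mono (Om := Finset.powersetCard k (Finset.univ : Finset (Fin n))) h.hp0 h.hp1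
    (X := fun E => ¬ Good n k D l E)
    (Y := fun E => (∃ v ∈ (Finset.univ : Finset (Fin n)),
        (1 + 1 / l) * D < ((E.filter (fun e => v ∈ e)).card : ℝ)) ∨
      ((∃ A ∈ (Finset.univ : Finset (Finset (Fin n))).erase ∅,
        (A.card : ℝ) * (D * k) ≤ n ∧ ((touch E A).card : ℝ) < (1 - 2 / l) * (A.card * D)) ∨
      (∃ b ∈ Finset.Icc 1 n, ∃ s ∈ Finset.Icc 1 n, cond n k b s ∧
        ∃ U ∈ Finset.powersetCard s (Finset.univ : Finset (Fin n)),
        ∃ F ∈ Finset.powersetCard b (Finset.powersetCard k U), F ⊆ E))) (by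
      intro E hE hbad
      by_contra hcon
      push Not at hcon
      obtain ⟨c1, c2, c3⟩ := hcon
      apply hbad
      have hunif : ∀ e ∈ E, e.card = k := fun e he => (Finset.mem_powersetCard.1 (hE he)).2
      refine ⟨hunif, h.hl, h.hl100, by linarith [h.hk], ?_, h.hM, fun v => c1 v (Finset.mem_univ v),
        fun A hA hb => c2 A (Finset.mem_erase.2 ⟨hA.ne_empty, Finset.mem_univ _⟩) hb, ?_⟩
      · have := h.hD
        have : 0 < l ^ 3 := by positivity
        linarith
      · intro F hF hne hlt
        by_contra hcon
        push Not at hcon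
        have hb1 : 1 ≤ F.card := hne.card_pos
        have hb1' : (1 : ℝ) ≤ F.card := by exact_mod_cast hb1
        have hbn : F.card ≤ n := by
          have : (F.card : ℝ) ≤ n := by nlinarith
          exact_mod_cast this
        set U := F.biUnion id with hU
        have hUn : U.card ≤ n := by
          have := Finset.card_le_univ U
          rwa [Fintype.card_fin] at this
        have hU1 : 1 ≤ U.card := by
          obtain ⟨e, he⟩ := hne
          have h1 : e ⊆ U := Finset.subset_biUnion_of_mem id he
          have h2 := Finset.card_le_card h1
          rw [hunif e (hF he)] at h2
          have := h.knat
          omega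
        have hskb : U.card ≤ k * F.card := by
          rw [mul_comm]
          apply Finset.card_biUnion_le_card_mul
          intro e he
          exact (hunif e (hF he)).le
        have hskb' : (U.card : ℝ) ≤ k * F.card := by exact_mod_cast hskb
        have hU1' : (0 : ℝ) < U.card := by exact_mod_cast hU1
        have hcond : cond n k F.card U.card := by
          refine ⟨hskb, ?_⟩
          have hq : (0 : ℝ) < (U.card : ℝ) / n := div_pos hU1' hn
          rw [← Real.exp_log hq, ← Real.exp_nat_mul]
          apply Real.exp_le_exp.2
          rw [Nat.cast_sub hskb, Nat.cast_mul]
          have hlog : Real.log ((U.card : ℝ) / n) ≤ - Real.log (n / (k * F.card)) := by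
            rw [← Real.log_inv, inv_div]
            apply Real.log_le_log hq
            exact div_le_div_of_nonneg_right hskb' hn.le
          have := mul_le_mul_of_nonneg_left hlog (by linarith : 0 ≤ (k * F.card : ℝ) - U.card)
          linarith
        exact c3 F.card (Finset.mem_Icc.2 ⟨hb1, hbn⟩) U.card (Finset.mem_Icc.2 ⟨hU1, hUn⟩) hcond U
          (Finset.mem_powersetCard.2 ⟨Finset.subset_univ _, rfl⟩) F
          (Finset.mem_powersetCard.2 ⟨fun e he => Finset.mem_powersetCard.2
            ⟨Finset.subset_biUnion_of_mem id he, hunif e (hF he)⟩, rfl⟩) hF)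
  refine hstep.trans ((Pr_or h.hp0 h.hp1 _ _).trans ?_)
  have h2 := Pr_or (Om := Finset.powersetCard k (Finset.univ : Finset (Fin n))) h.hp0 h.hp1
    (fun E => (∃ A ∈ (Finset.univ : Finset (Finset (Fin n))).erase ∅,
        (A.card : ℝ) * (D * k) ≤ n ∧ ((touch E A).card : ℝ) < (1 - 2 / l) * (A.card * D)))
    (fun E => (∃ b ∈ Finset.Icc 1 n, ∃ s ∈ Finset.Icc 1 n, cond n k b s ∧
        ∃ U ∈ Finset.powersetCard s (Finset.univ : Finset (Fin n)),
        ∃ F ∈ Finset.powersetCard b (Finset.powersetCard k U), F ⊆ E))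
  have b1 := h.B1
  have b2 := h.B2
  have b3 := h.B3
  have : 4 / (n : ℝ) = 1 / n + (2 / n + 1 / n) := by ring
  rw [this]
  linarith

lemma main (h : Par n k p D l) :
    1 - 4 / n ≤ ghProb n k p (fun G => G.IsExpanding (Real.exp (-36) / 4096)) ∧
      ghProb n k p (fun G => G.IsExpanding (Real.exp (-36) / 4096)) ≤ 1 := by
  rw [ghProb_eq]
  constructor
  · have h1 := h.not_good
    have h2 := Pr_compl (Om := Finset.powersetCard k (Finset.univ : Finset (Fin n))) (p := p)
      (fun E => Good n k D l E)
    have h3 := Pr_mono (Om := Finset.powersetCard k (Finset.univ : Finset (Fin n))) h.hp0 h.hp1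
      (X := fun E => Good n k D l E)
      (Y := fun E => ∃ h : ∀ e ∈ E, e.card = k,
        (KGraph.mk E h).IsExpanding (Real.exp (-36) / 4096)) (by
        intro E _ hg
        exact ⟨hg.unif, hg.expanding ⟨E, hg.unif⟩ rfl⟩)
    linarith
  · rw [Pr_compl]
    have := Pr_nonneg (Om := Finset.powersetCard k (Finset.univ : Finset (Fin n))) h.hp0 h.hp1
      (fun E => ¬ ∃ h : ∀ e ∈ E, e.card = k,
        (KGraph.mk E h).IsExpanding (Real.exp (-36) / 4096))
    linarith

end Par
end KGraph

/-- there is a universal `ξ ∈ (0,1]` such that whp `G^k(n,p)` is `ξ`-expanding,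
whenever `k = ω(log n)` and `n/k ≥ p C(n-1,k-1) = ω(log³ n)`. -/
theorem whp_Gknp_isExpanding :
    ∃ ξ : ℝ, 0 < ξ ∧ ξ ≤ 1 ∧
      ∀ (k : ℕ → ℕ) (p : ℕ → ℝ), (∀ n, 0 < p n) →
        Filter.Tendsto (fun n => (k n : ℝ) / Real.log n) Filter.atTop Filter.atTop →
        (∀ᶠ n in Filter.atTop,
          p n * (((n - 1).choose (k n - 1) : ℕ) : ℝ) ≤ (n : ℝ) / k n) →
        Filter.Tendsto
          (fun n => p n * (((n - 1).choose (k n - 1) : ℕ) : ℝ) / Real.log n ^ 3)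
          Filter.atTop Filter.atTop →
        Filter.Tendsto
          (fun n => ghProb n (k n) (p n) (fun G => G.IsExpanding ξ))
          Filter.atTop (nhds 1) := by
  refine ⟨Real.exp (-36) / 4096, by positivity, ?_, ?_⟩
  · have : Real.exp (-36) ≤ 1 := Real.exp_le_one_iff.mpr (by norm_num)
    linarith
  intro k p hp hk hM hD
  have hlog : Filter.Tendsto (fun n : ℕ => Real.log (n : ℝ)) Filter.atTop Filter.atTop :=
    Real.tendsto_log_atTop.comp tendsto_natCast_atTop_atTop
  have hev : ∀ᶠ n in Filter.atTop,
      KGraph.Par n (k n) (p n) (p n * (((n - 1).choose (k n - 1) : ℕ) : ℝ)) (Real.log n) := by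
    filter_upwards [hlog.eventually_ge_atTop 100, hk.eventually_ge_atTop 10, hM,
      hD.eventually_ge_atTop 16] with n h1 h2 h3 h4
    have hl : 0 < Real.log n := by linarith
    rw [le_div_iff₀ hl] at h2
    rw [le_div_iff₀ (by positivity)] at h4
    have hk1 : (1000 : ℝ) ≤ k n := by linarith
    have hk0 : (0 : ℝ) < k n := by linarith
    have hkn : 1000 ≤ k n := by exact_mod_cast hk1
    rw [le_div_iff₀ hk0] at h3
    have hl3 : (100 : ℝ) ^ 3 ≤ Real.log n ^ 3 := by gcongr
    set C := (n - 1).choose (k n - 1) with hC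
    have hD2 : (2 : ℝ) ≤ p n * (C : ℝ) := by linarith
    have hkn2 : 2 * k n ≤ n := by
      have : (2 : ℝ) * k n ≤ n := le_trans (by gcongr) h3
      exact_mod_cast this
    have hch : n - 1 ≤ C := KGraph.choose_ge (n - 1) (k n - 1) (by omega) (by omega)
    have hp1 : p n ≤ 1 := by
      have hc2 : n ≤ C * k n := by
        have : n ≤ (n - 1) * 2 := by omega
        calc n ≤ (n - 1) * 2 := this
          _ ≤ C * k n := Nat.mul_le_mul hch (by omega)
      have hc3 : (n : ℝ) ≤ C * k n := by exact_mod_cast hc2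
      have hn0 : (0 : ℝ) < C * k n := by
        refine lt_of_lt_of_le ?_ hc3
        exact_mod_cast (by omega : 0 < n)
      by_contra hcon
      push Not at hcon
      nlinarith
    exact ⟨rfl, h1, h2, (hp n).le, hp1, rfl, h4, h3⟩
  have hlow : Filter.Tendsto (fun n : ℕ => 1 - 4 / (n : ℝ)) Filter.atTop (nhds 1) := by
    have := (tendsto_const_div_atTop_nhds_zero_nat (4 : ℝ)).const_sub 1
    simpa using this
  refine tendsto_of_tendsto_of_tendsto_of_le_of_le' hlow tendsto_const_nhds ?_ ?_
  · filter_upwards [hev] with n hn using hn.main.1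
  · filter_upwards [hev] with n hn using hn.main.2
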